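/- Let f_j, g_i be convex polynomials and suppose Assumption 1 holds: there is a saddle point (x̄, μ̄, ν̄) ∈ K_{z₀} × ℝ^m_+ × ℝ^p_+ of the Lagrangian L_{z₀}(x,μ,ν) = λᵀf(x) + Σμ_i g_i(x) + Σν_j(f_j(x) − f_j(z₀)) with ∇²_{xx}L_{z₀}(x̄, μ̄, ν̄) positive definite. Then λᵀf − f̄_{z₀} belongs to the quadratic module Q(−g, −f_{z₀}); i.e., there exist sum-of-squares polynomials σ₀, σ₁,…,σ_m, σ̄₁,…,σ̄_p such that λᵀf − f̄_{z₀} = σ₀ − Σ_i σ_i g_i − Σ_j σ̄_j (f_j − f_j(z₀)). -/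

import Mathlib

/-- A real multivariate polynomial is a sum of squares. -/
def IsSOS {n : ℕ} (q : MvPolynomial (Fin n) ℝ) : Prop :=
  ∃ (r : ℕ) (s : Fin r → MvPolynomial (Fin n) ℝ), q = ∑ l, (s l) ^ 2

namespace SosCvx

/-- Adjoin an element to a preordering. -/
def adj {A : Type*} [CommRing A] (S : Subsemiring A) (hS : ∀ x, x * x ∈ S) (a : A) :
    Subsemiring A where
  carrier := {z | ∃ s ∈ S, ∃ t ∈ S, z = s + t * a}
  zero_mem' := ⟨0, S.zero_mem, 0, S.zero_mem, by ring⟩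
  one_mem' := ⟨1, S.one_mem, 0, S.zero_mem, by ring⟩
  add_mem' := by
    rintro _ _ ⟨s, hs, t, ht, rfl⟩ ⟨s', hs', t', ht', rfl⟩
    exact ⟨s + s', S.add_mem hs hs', t + t', S.add_mem ht ht', by ring⟩
  mul_mem' := by
    rintro _ _ ⟨s, hs, t, ht, rfl⟩ ⟨s', hs', t', ht', rfl⟩
    exact ⟨s * s' + t * t' * (a * a),
      S.add_mem (S.mul_mem hs hs') (S.mul_mem (S.mul_mem ht ht') (hS a)),
      s * t' + t * s', S.add_mem (S.mul_mem hs ht') (S.mul_mem ht hs'), by ring⟩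

theorem mem_adj {A : Type*} [CommRing A] {S : Subsemiring A} {hS : ∀ x, x * x ∈ S} {a z : A} :
    z ∈ adj S hS a ↔ ∃ s ∈ S, ∃ t ∈ S, z = s + t * a := Iff.rfl

theorem le_adj {A : Type*} [CommRing A] {S : Subsemiring A} (hS : ∀ x, x * x ∈ S) (a : A) :
    S ≤ adj S hS a := fun s hs => ⟨s, hs, 0, S.zero_mem, by ring⟩

theorem self_mem_adj {A : Type*} [CommRing A] {S : Subsemiring A} (hS : ∀ x, x * x ∈ S) (a : A) :
    a ∈ adj S hS a := ⟨0, S.zero_mem, 1, S.one_mem, by ring⟩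

theorem exists_maximal {A : Type*} [CommRing A] (T : Subsemiring A) (hT : ∀ x, x * x ∈ T)
    (h1 : -1 ∉ T) : ∃ P : Subsemiring A, T ≤ P ∧ -1 ∉ P ∧
      (∀ b, b ∉ P → ∃ s ∈ P, ∃ t ∈ P, -1 = s + t * b) := by
  obtain ⟨P, hTP, hP⟩ := zorn_le_nonempty₀ {S : Subsemiring A | T ≤ S ∧ -1 ∉ S} (by
    intro c hc hchain y hy
    refine ⟨sSup c, ⟨(hc hy).1.trans (le_sSup hy), ?_⟩, fun z hz => le_sSup hz⟩
    rw [Subsemiring.mem_sSup_of_directedOn ⟨y, hy⟩ hchain.directedOn]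
    rintro ⟨s, hs, h⟩
    exact (hc hs).2 h) T ⟨le_rfl, h1⟩
  have hsq : ∀ x, x * x ∈ P := fun x => hTP (hT x)
  refine ⟨P, hTP, hP.prop.2, ?_⟩
  intro b hb
  have : -1 ∈ adj P hsq b := by
    by_contra h
    have := hP.le_of_ge (y := adj P hsq b) ⟨hTP.trans (le_adj hsq b), h⟩ (le_adj hsq b)
    exact hb (this (self_mem_adj hsq b))
  exact this

theorem exists_ordered_field {A : Type} [CommRing A] (T : Subsemiring A) (hT : ∀ x, x * x ∈ T)
    (h1 : -1 ∉ T) : ∃ (K : Type) (_ : Field K) (_ : LinearOrder K) (_ : IsStrictOrderedRing K)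
      (φ : A →+* K), ∀ a ∈ T, 0 ≤ φ a := by
  classical
  obtain ⟨P, hTP, hP1, hmax⟩ := exists_maximal T hT h1
  have hsq : ∀ x, x * x ∈ P := fun x => hTP (hT x)
  have htot : ∀ a, a ∈ P ∨ -a ∈ P := by
    intro a
    by_contra! hcon
    obtain ⟨s, hs, t, ht, e⟩ := hmax a hcon.1
    obtain ⟨s', hs', t', ht', e'⟩ := hmax (-a) hcon.2
    apply hP1
    have : (-1 : A) = s + s' + s * s' + t * t' * (a * a) := by
      have h1 : t * a = -1 - s := by rw [e]; ring
      have h2 : t' * a = 1 + s' := by linear_combination e'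
      linear_combination (-1 : A) * (t' * a) * h1 + (-1 : A) * (-1 - s) * h2
    rw [this]
    exact P.add_mem (P.add_mem (P.add_mem hs hs') (P.mul_mem hs hs'))
      (P.mul_mem (P.mul_mem ht ht') (hsq a))
  let I : Ideal A :=
    { carrier := {a | a ∈ P ∧ -a ∈ P}
      zero_mem' := ⟨P.zero_mem, by simp⟩
      add_mem' := by
        rintro a b ⟨h1, h2⟩ ⟨h3, h4⟩
        exact ⟨P.add_mem h1 h3, by rw [neg_add]; exact P.add_mem h2 h4⟩
      smul_mem' := by
        rintro c a ⟨h1, h2⟩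
        rcases htot c with h | h
        · exact ⟨P.mul_mem h h1, by
            have := P.mul_mem h h2
            simpa using this⟩
        · exact ⟨by simpa using P.mul_mem h h2, by simpa using P.mul_mem h h1⟩ }
  have hI : ∀ a, a ∈ I ↔ a ∈ P ∧ -a ∈ P := fun a => Iff.rfl
  have key : ∀ a b, a ∉ P → b ∉ P → a * b ∉ I := by
    intro a b ha hb hab
    obtain ⟨s, hs, t, ht, e⟩ := hmax a ha
    obtain ⟨s', hs', t', ht', e'⟩ := hmax b hb
    have h3 : t * t' * (a * b) ∈ I := I.mul_mem_left _ hab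
    have h4 : t * t' * (a * b) = 1 + s + s' + s * s' := by
      have h1 : t * a = -1 - s := by rw [e]; ring
      have h2 : t' * b = -1 - s' := by rw [e']; ring
      linear_combination (t' * b) * h1 + (-1 - s) * h2
    rw [h4] at h3
    apply hP1
    have := P.add_mem (P.add_mem (P.add_mem ((hI _).1 h3).2 hs) hs') (P.mul_mem hs hs')
    convert this using 1
    ring
  have hprime : I.IsPrime := by
    constructor
    · intro h
      have : (1 : A) ∈ I := by rw [h]; trivial
      exact hP1 this.2
    · intro a b hab
      by_contra! hcon
      have h2 : ∀ a, a ∉ I → a ∉ P ∨ -a ∉ P := by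
        intro a ha
        by_contra! h
        exact ha h
      rcases h2 a hcon.1 with h | h <;> rcases h2 b hcon.2 with h' | h'
      · exact key _ _ h h' hab
      · exact key _ _ h h' (by simpa using hab)
      · exact key _ _ h h' (by simpa using hab)
      · exact key _ _ h h' (by simpa using hab)
  obtain ⟨K, _, φ, hφ0, hφs⟩ : ∃ (K : Type) (_ : Field K) (φ : A →+* K),
      (∀ a, φ a = 0 ↔ a ∈ I) ∧ (∀ z : K, ∃ a b, φ b ≠ 0 ∧ z = φ a / φ b) := by
    refine ⟨FractionRing (A ⧸ I), inferInstance,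
      (algebraMap (A ⧸ I) (FractionRing (A ⧸ I))).comp (Ideal.Quotient.mk I), ?_, ?_⟩
    · intro a
      simp [Ideal.Quotient.eq_zero_iff_mem]
    · intro z
      obtain ⟨a, b, hb, rfl⟩ := IsFractionRing.div_surjective (A := A ⧸ I) z
      obtain ⟨a, rfl⟩ := Ideal.Quotient.mk_surjective a
      obtain ⟨b, rfl⟩ := Ideal.Quotient.mk_surjective b
      refine ⟨a, b, ?_, rfl⟩
      have := nonZeroDivisors.ne_zero hb
      simpa using this
  let C : RingCone K :=
    { carrier := {z | ∃ a ∈ P, ∃ b, φ b ≠ 0 ∧ z = φ a / φ b ^ 2}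
      zero_mem' := ⟨0, P.zero_mem, 1, by simp, by simp⟩
      one_mem' := ⟨1, P.one_mem, 1, by simp, by simp⟩
      add_mem' := by
        rintro _ _ ⟨a, ha, b, hb, rfl⟩ ⟨a', ha', b', hb', rfl⟩
        refine ⟨a * (b' * b') + a' * (b * b), P.add_mem (P.mul_mem ha (hsq _))
          (P.mul_mem ha' (hsq _)), b * b', by simp [hb, hb'], ?_⟩
        simp only [map_add, map_mul]
        field_simp
      mul_mem' := by
        rintro _ _ ⟨a, ha, b, hb, rfl⟩ ⟨a', ha', b', hb', rfl⟩
        refine ⟨a * a', P.mul_mem ha ha', b * b', by simp [hb, hb'], ?_⟩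
        simp only [map_mul]
        field_simp
      eq_zero_of_mem_of_neg_mem' := by
        rintro _ ⟨a, ha, b, hb, rfl⟩ ⟨a', ha', b', hb', h⟩
        have h0 : φ (a * (b' * b') + a' * (b * b)) = 0 := by
          simp only [map_add, map_mul]
          field_simp at h
          linear_combination -h
        rw [hφ0] at h0
        have h5 : -(a * (b' * b')) ∈ P := by
          have := P.add_mem h0.2 (P.mul_mem ha' (hsq b))
          convert this using 1
          ring
        have h6 : a * (b' * b') ∈ I := ⟨P.mul_mem ha (hsq _), h5⟩
        rw [← hφ0] at h6
        simp only [map_mul, mul_eq_zero, hb', or_false] at h6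
        simp [h6] }
  have hC : ∀ z, z ∈ C ↔ ∃ a ∈ P, ∃ b, φ b ≠ 0 ∧ z = φ a / φ b ^ 2 := fun z => Iff.rfl
  have : HasMemOrNegMem C := ⟨by
    intro z
    obtain ⟨a, b, hb, rfl⟩ := hφs z
    rcases htot (a * b) with h | h
    · left
      refine ⟨a * b, h, b, hb, ?_⟩
      simp only [map_mul]; field_simp
    · right
      refine ⟨-(a * b), h, b, hb, ?_⟩
      simp only [map_mul, map_neg]; field_simp⟩
  let lo : LinearOrder K := LinearOrder.mkOfAddGroupCone C
  have ior : IsOrderedRing K := IsOrderedRing.mkOfCone C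
  refine ⟨K, inferInstance, lo, IsOrderedRing.toIsStrictOrderedRing K, φ, ?_⟩
  intro a ha
  show φ a - 0 ∈ C
  rw [hC]
  exact ⟨a, hTP ha, 1, by simp, by simp⟩

end SosCvx

namespace SosCvx
open ArchimedeanClass

section ordered
variable {K : Type} [Field K] [LinearOrder K] [IsStrictOrderedRing K]

theorem fin_of_abs_le_one (z : K) (h : |z| ≤ 1) : 0 ≤ mk z := by
  rw [← mk_one, mk_le_mk]
  exact ⟨1, by simpa using h⟩

theorem fin_add {a b : K} (ha : 0 ≤ mk a) (hb : 0 ≤ mk b) : 0 ≤ mk (a + b) :=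
  (le_min ha hb).trans (min_le_mk_add a b)

theorem fin_mul {a b : K} (ha : 0 ≤ mk a) (hb : 0 ≤ mk b) : 0 ≤ mk (a * b) := by
  rw [mk_mul]; exact add_nonneg ha hb

theorem st_sum {ι : Type*} (s : Finset ι) (z : ι → K) (h : ∀ i ∈ s, 0 ≤ mk (z i)) :
    0 ≤ mk (∑ i ∈ s, z i) ∧ stdPart (∑ i ∈ s, z i) = ∑ i ∈ s, stdPart (z i) := by
  classical
  induction s using Finset.induction_on with
  | empty => simp
  | insert a s ha ih =>
    have ih' := ih (fun i hi => h i (Finset.mem_insert_of_mem hi))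
    have h1 := h a (Finset.mem_insert_self _ _)
    rw [Finset.sum_insert ha, Finset.sum_insert ha]
    exact ⟨fin_add h1 ih'.1, by rw [stdPart_add h1 ih'.1, ih'.2]⟩

theorem st_prod {ι : Type*} (s : Finset ι) (z : ι → K) (h : ∀ i ∈ s, 0 ≤ mk (z i)) :
    0 ≤ mk (∏ i ∈ s, z i) ∧ stdPart (∏ i ∈ s, z i) = ∏ i ∈ s, stdPart (z i) := by
  classical
  induction s using Finset.induction_on with
  | empty => simp
  | insert a s ha ih =>
    have ih' := ih (fun i hi => h i (Finset.mem_insert_of_mem hi))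
    have h1 := h a (Finset.mem_insert_self _ _)
    rw [Finset.prod_insert ha, Finset.prod_insert ha]
    exact ⟨fin_mul h1 ih'.1, by rw [stdPart_mul h1 ih'.1, ih'.2]⟩

theorem st_pow (z : K) (h : 0 ≤ mk z) (k : ℕ) :
    0 ≤ mk (z ^ k) ∧ stdPart (z ^ k) = stdPart z ^ k := by
  have := st_prod (Finset.range k) (fun _ => z) (fun _ _ => h)
  simpa using this

theorem infinite_contra {n : ℕ} (f : ℝ →+*o K) (x : Fin n → K) (H : MvPolynomial (Fin n) ℝ)
    (k d : Fin n → ℕ) (E : ℕ) (hE : 0 < E) (hd : ∀ i, Even (d i)) (hkd : ∀ i, d i * k i = E)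
    (hwt : ∀ α ∈ H.support, ∑ i, α i * k i ≤ E)
    (hpos : ∀ y : Fin n → ℝ, y ≠ 0 →
      0 < ∑ α ∈ H.support, if ∑ i, α i * k i = E then H.coeff α * ∏ i, y i ^ α i else 0)
    (hx : ∀ N : ℕ, (N : K) ≤ ∑ i, x i ^ 2) (c : ℝ) :
    f c < MvPolynomial.eval₂ (f : ℝ →+* K) x H := by
  have hd0 : ∀ i, 0 < d i := fun i => by
    rcases Nat.eq_zero_or_pos (d i) with h | h
    · have := hkd i; rw [h] at this; omega
    · exact h
  have hd2 : ∀ i, 2 ≤ d i := fun i => by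
    obtain ⟨m, hm⟩ := hd i
    have := hd0 i
    omega
  set D : K := ∑ i, x i ^ d i with hD
  have hxd : ∀ i, 0 ≤ x i ^ d i := fun i => (hd i).pow_nonneg _
  have hDinf : ∀ N : ℕ, (N : K) ≤ D := by
    intro N
    have h1 : ∑ i, x i ^ 2 ≤ ∑ i, (1 + x i ^ d i) := by
      apply Finset.sum_le_sum
      intro i _
      rcases le_total |x i| 1 with h | h
      · have : x i ^ 2 ≤ 1 := by
          rw [← sq_abs]; exact pow_le_one₀ (abs_nonneg _) h
        linarith [hxd i]
      · have h3 : |x i| ^ 2 ≤ |x i| ^ d i := pow_le_pow_right₀ h (hd2 i)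
        rw [sq_abs, (hd i).pow_abs] at h3
        linarith
    rw [Finset.sum_add_distrib] at h1
    have h2 := hx (N + n)
    simp only [Finset.sum_const, Finset.card_univ, Fintype.card_fin, nsmul_eq_mul, mul_one] at h1
    push_cast at h2
    linarith
  have hDpos : 0 < D := lt_of_lt_of_le one_pos (by simpa using hDinf 1)
  have hxD : ∀ i, x i ^ d i ≤ D := fun i =>
    Finset.single_le_sum (f := fun i => x i ^ d i) (fun j _ => hxd j) (Finset.mem_univ i)
  set r : Fin n → K := fun i => x i ^ d i / D with hr
  have hr0 : ∀ i, 0 ≤ r i := fun i => div_nonneg (hxd i) hDpos.le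
  have hr1 : ∀ i, r i ≤ 1 := fun i => (div_le_one hDpos).2 (hxD i)
  have hrf : ∀ i, 0 ≤ mk (r i) := fun i => fin_of_abs_le_one _ (by
    rw [abs_of_nonneg (hr0 i)]; exact hr1 i)
  have hrho0 : ∀ i, 0 ≤ stdPart (r i) := fun i => stdPart_nonneg (hr0 i)
  have hrsum : ∑ i, stdPart (r i) = 1 := by
    rw [← (st_sum Finset.univ r (fun i _ => hrf i)).2]
    have : ∑ i, r i = 1 := by
      rw [hr, ← Finset.sum_div, ← hD, div_self hDpos.ne']
    rw [this, stdPart_one]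
  have hDi1 : |D⁻¹| ≤ 1 := by
    rw [abs_of_nonneg (inv_nonneg.2 hDpos.le)]
    exact inv_le_one_of_one_le₀ (by simpa using hDinf 1)
  have hDi : 0 ≤ mk D⁻¹ := fin_of_abs_le_one _ hDi1
  have hDi0 : stdPart D⁻¹ = 0 := by
    apply le_antisymm _ (stdPart_nonneg (inv_nonneg.2 hDpos.le))
    by_contra! h
    have h1 : f (stdPart D⁻¹ / 2) < D⁻¹ := lt_of_lt_stdPart f hDi (by linarith)
    obtain ⟨N, hN⟩ := exists_nat_gt (2 / stdPart D⁻¹)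
    have hN0 : (0 : ℝ) < N := lt_trans (by positivity) hN
    have h2 : D⁻¹ ≤ ((N : K))⁻¹ := inv_anti₀ (by
      have : 0 < N := by exact_mod_cast hN0
      exact_mod_cast this) (hDinf N)
    have h3 : f ((N : ℝ)⁻¹) ≤ f (stdPart D⁻¹ / 2) := by
      apply OrderRingHom.monotone'
      rw [inv_le_comm₀ hN0 (by positivity), inv_div]
      exact hN.le
    rw [map_inv₀, map_natCast] at h3
    exact absurd (lt_of_le_of_lt h3 h1) (not_lt.2 h2)
  -- signs
  set s : Fin n → ℝ := fun i => if 0 ≤ x i then 1 else -1 with hs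
  set y : Fin n → ℝ := fun i => s i * stdPart (r i) ^ ((d i : ℝ)⁻¹) with hy
  have hs2 : ∀ i, s i * s i = 1 := by
    intro i; simp only [hs]; split_ifs <;> norm_num
  have hyd : ∀ i, y i ^ d i = stdPart (r i) := by
    intro i
    simp only [hy]
    rw [mul_pow, ← (hd i).pow_abs]
    have : |s i| = 1 := by simp only [hs]; split_ifs <;> norm_num
    rw [this, one_pow, one_mul, Real.rpow_inv_natCast_pow (hrho0 i) (hd0 i).ne']
  have hy0 : y ≠ 0 := by
    intro h
    have : ∑ i, stdPart (r i) = 0 := by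
      apply Finset.sum_eq_zero
      intro i _
      rw [← hyd i, h]
      simp [(hd0 i).ne']
    rw [hrsum] at this
    exact one_ne_zero this
  have hmono : ∀ α : Fin n →₀ ℕ, ∑ i, α i * k i ≤ E →
      0 ≤ mk ((∏ i, x i ^ α i) / D) ∧ stdPart ((∏ i, x i ^ α i) / D) =
        if ∑ i, α i * k i = E then ∏ i, y i ^ α i else 0 := by
    intro α hα
    set z : K := (∏ i, x i ^ α i) / D with hz
    have hzE : z ^ E = (∏ i, r i ^ (α i * k i)) * D⁻¹ ^ (E - ∑ i, α i * k i) := by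
      have e1 : ∏ i, r i ^ (α i * k i) = (∏ i, x i ^ α i) ^ E / D ^ (∑ i, α i * k i) := by
        simp only [hr, div_pow, Finset.prod_div_distrib]
        rw [← Finset.prod_pow_eq_pow_sum, ← Finset.prod_pow]
        congr 1
        apply Finset.prod_congr rfl
        intro i _
        rw [← pow_mul, ← pow_mul, ← hkd i]
        congr 1
        ring
      rw [e1, hz, div_pow, inv_pow, ← div_eq_mul_inv, div_div, ← pow_add]
      congr 2
      omega
    have hz1 : |z| ≤ 1 := by
      have h1 : |z| ^ E ≤ 1 := by
        rw [← abs_pow, hzE, abs_mul, Finset.abs_prod]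
        apply mul_le_one₀ _ (abs_nonneg _)
        · rw [abs_pow]; exact pow_le_one₀ (abs_nonneg _) hDi1
        · apply Finset.prod_le_one
          · intro i _; positivity
          · intro i _
            rw [abs_of_nonneg (pow_nonneg (hr0 i) _)]
            exact pow_le_one₀ (hr0 i) (hr1 i)
      exact (pow_le_one_iff_of_nonneg (abs_nonneg _) hE.ne').1 h1
    have hzf := fin_of_abs_le_one z hz1
    refine ⟨hzf, ?_⟩
    have hstE : stdPart z ^ E = (∏ i, stdPart (r i) ^ (α i * k i)) *
        (0 : ℝ) ^ (E - ∑ i, α i * k i) := by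
      have p1 := st_prod Finset.univ (fun i => r i ^ (α i * k i))
        (fun i _ => (st_pow (r i) (hrf i) _).1)
      have p2 := st_pow D⁻¹ hDi (E - ∑ i, α i * k i)
      rw [← (st_pow z hzf E).2, hzE, stdPart_mul p1.1 p2.1, p1.2, p2.2, hDi0]
      congr 1
      apply Finset.prod_congr rfl
      intro i _
      exact (st_pow (r i) (hrf i) _).2
    split_ifs with hwE
    · rw [hwE, Nat.sub_self, pow_zero, mul_one] at hstE
      have hyE : (∏ i, y i ^ α i) ^ E = stdPart z ^ E := by
        rw [hstE, ← Finset.prod_pow]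
        apply Finset.prod_congr rfl
        intro i _
        rw [← hyd i, ← pow_mul, ← pow_mul, ← hkd i]
        congr 1
        ring
      set σ : ℝ := ∏ i, s i ^ α i with hσ
      have hσ2 : σ * σ = 1 := by
        rw [hσ, ← Finset.prod_mul_distrib]
        apply Finset.prod_eq_one
        intro i _
        rw [← mul_pow, hs2, one_pow]
      have hw' : 0 ≤ σ * ∏ i, y i ^ α i := by
        rw [hσ, ← Finset.prod_mul_distrib]
        apply Finset.prod_nonneg
        intro i _
        rw [← mul_pow]
        apply pow_nonneg
        simp only [hy]
        rw [← mul_assoc, hs2, one_mul]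
        exact Real.rpow_nonneg (hrho0 i) _
      have hw : 0 ≤ σ * stdPart z := by
        have h1 : 0 ≤ f σ * z := by
          rw [hσ, hz, map_prod, ← mul_div_assoc, ← Finset.prod_mul_distrib]
          apply div_nonneg _ hDpos.le
          apply Finset.prod_nonneg
          intro i _
          rw [map_pow, ← mul_pow]
          apply pow_nonneg
          simp only [hs]
          split_ifs with h
          · simpa using h
          · push Not at h
            simp only [map_neg, map_one]
            linarith
        have h2 := stdPart_nonneg h1
        rwa [stdPart_mul (mk_map_nonneg_of_archimedean f σ) hzf, stdPart_map_real] at h2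
      have h3 : σ * stdPart z = σ * ∏ i, y i ^ α i := by
        apply (pow_left_inj₀ hw hw' hE.ne').1
        rw [mul_pow, mul_pow, hyE]
      calc stdPart z = σ * (σ * stdPart z) := by rw [← mul_assoc, hσ2, one_mul]
        _ = _ := by rw [h3, ← mul_assoc, hσ2, one_mul]
    · have : E - ∑ i, α i * k i ≠ 0 := by omega
      rw [zero_pow this, mul_zero] at hstE
      exact pow_eq_zero_iff hE.ne' |>.1 hstE
  set Φ := ∑ α ∈ H.support, if ∑ i, α i * k i = E then H.coeff α * ∏ i, y i ^ α i else 0 with hΦ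
  have hΦpos : 0 < Φ := hpos y hy0
  have hHD : MvPolynomial.eval₂ (f : ℝ →+* K) x H / D =
      ∑ α ∈ H.support, f (H.coeff α) * ((∏ i, x i ^ α i) / D) := by
    rw [MvPolynomial.eval₂_eq', Finset.sum_div]
    apply Finset.sum_congr rfl
    intro α _
    rw [mul_div_assoc]
    rfl
  have hst := st_sum H.support (fun α => f (H.coeff α) * ((∏ i, x i ^ α i) / D))
    (fun α hα => fin_mul (mk_map_nonneg_of_archimedean f _) (hmono α (hwt α hα)).1)
  rw [← hHD] at hst
  have hstΦ : stdPart (MvPolynomial.eval₂ (f : ℝ →+* K) x H / D) = Φ := by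
    rw [hst.2, hΦ]
    apply Finset.sum_congr rfl
    intro α hα
    rw [stdPart_mul (mk_map_nonneg_of_archimedean f _) (hmono α (hwt α hα)).1, stdPart_map_real,
      (hmono α (hwt α hα)).2]
    split_ifs <;> simp
  have h1 : f (Φ / 2) < MvPolynomial.eval₂ (f : ℝ →+* K) x H / D :=
    lt_of_lt_stdPart f hst.1 (by rw [hstΦ]; linarith)
  rw [lt_div_iff₀ hDpos] at h1
  refine lt_of_le_of_lt ?_ h1
  obtain ⟨N, hN⟩ := exists_nat_gt (c / (Φ / 2))
  rw [div_lt_iff₀ (by positivity)] at hN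
  have h2 : f c ≤ f (N * (Φ / 2)) := OrderRingHom.monotone' _ hN.le
  refine h2.trans ?_
  rw [map_mul, map_natCast, mul_comm]
  apply mul_le_mul_of_nonneg_left (hDinf N)
  have : f 0 ≤ f (Φ / 2) := OrderRingHom.monotone' _ (by positivity)
  rwa [map_zero] at this

end ordered
end SosCvx

namespace SosCvx
open MvPolynomial

theorem C_mem {n : ℕ} (S : Subsemiring (MvPolynomial (Fin n) ℝ)) (hS : ∀ x, x * x ∈ S) (r : ℝ)
    (hr : 0 ≤ r) : (C r : MvPolynomial (Fin n) ℝ) ∈ S := by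
  have := hS (C (Real.sqrt r))
  rwa [← C_mul, Real.mul_self_sqrt hr] at this

theorem bounded_of_ball {n : ℕ} (S : Subsemiring (MvPolynomial (Fin n) ℝ)) (hS : ∀ x, x * x ∈ S)
    (N : ℝ) (hN : C N - ∑ i, X i ^ 2 ∈ S) (p : MvPolynomial (Fin n) ℝ) :
    ∃ M : ℝ, C M - p ∈ S ∧ C M + p ∈ S := by
  have hX : ∀ i, ∃ M : ℝ, C M - X i ∈ S ∧ C M + X i ∈ S := by
    intro i
    have h1 : C N - X i ^ 2 ∈ S := by
      have : C N - X i ^ 2 = (C N - ∑ j, X j ^ 2) + ∑ j ∈ Finset.univ.erase i, X j ^ 2 := by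
        rw [← Finset.add_sum_erase _ _ (Finset.mem_univ i)]
        ring
      rw [this]
      refine S.add_mem hN (S.sum_mem fun j _ => ?_)
      rw [pow_two]
      exact hS _
    have hC : (C (1 / 2) : MvPolynomial (Fin n) ℝ) * 2 = 1 := by
      rw [show (2 : MvPolynomial (Fin n) ℝ) = C 2 from rfl, ← C_mul]; norm_num
    refine ⟨N + 1 / 4, ?_, ?_⟩
    · have := S.add_mem h1 (hS (X i - C (1 / 2)))
      convert this using 1
      have h4 : (C (N + 1 / 4) : MvPolynomial (Fin n) ℝ) = C N + C (1 / 2) * C (1 / 2) := by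
        rw [← C_mul, ← C_add]; norm_num
      rw [h4]
      linear_combination (X i) * hC
    · have := S.add_mem h1 (hS (X i + C (1 / 2)))
      convert this using 1
      have h4 : (C (N + 1 / 4) : MvPolynomial (Fin n) ℝ) = C N + C (1 / 2) * C (1 / 2) := by
        rw [← C_mul, ← C_add]; norm_num
      rw [h4]
      linear_combination (-X i) * hC
  induction p using MvPolynomial.induction_on with
  | C a =>
    refine ⟨|a|, ?_, ?_⟩
    · rw [← C_sub]; exact C_mem S hS _ (by linarith [le_abs_self a])
    · rw [← C_add]; exact C_mem S hS _ (by linarith [neg_abs_le a])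
  | add p q hp hq =>
    obtain ⟨M, h1, h2⟩ := hp
    obtain ⟨M', h3, h4⟩ := hq
    refine ⟨M + M', ?_, ?_⟩
    · convert S.add_mem h1 h3 using 1; rw [C_add]; ring
    · convert S.add_mem h2 h4 using 1; rw [C_add]; ring
  | mul_X p i hp =>
    obtain ⟨M, h1, h2⟩ := hp
    obtain ⟨M', h3, h4⟩ := hX i
    have hC : (C (1 / 2) : MvPolynomial (Fin n) ℝ) * 2 = 1 := by
      rw [show (2 : MvPolynomial (Fin n) ℝ) = C 2 from rfl, ← C_mul]; norm_num
    have hh := C_mem S hS (1 / 2) (by norm_num)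
    refine ⟨M * M', ?_, ?_⟩
    · convert S.mul_mem hh (S.add_mem (S.mul_mem h1 h4) (S.mul_mem h2 h3)) using 1
      rw [C_mul]
      linear_combination (-(C M * C M' - p * X i)) * hC
    · convert S.mul_mem hh (S.add_mem (S.mul_mem h1 h3) (S.mul_mem h2 h4)) using 1
      rw [C_mul]
      linear_combination (-(C M * C M' + p * X i)) * hC

theorem woermann {n : ℕ} (T : Subsemiring (MvPolynomial (Fin n) ℝ)) (hT : ∀ x, x * x ∈ T)
    (N : ℝ) (hN0 : 0 ≤ N) (t t' : MvPolynomial (Fin n) ℝ) (ht : t ∈ T) (ht' : t' ∈ T)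
    (e : t' * (C N - ∑ i, X i ^ 2) = 1 + t) :
    ∃ M : ℝ, C M - ∑ i, X i ^ 2 ∈ T := by
  set q : MvPolynomial (Fin n) ℝ := ∑ i, X i ^ 2 with hq
  have hqT : q ∈ T := T.sum_mem fun i _ => by rw [pow_two]; exact hT _
  have h1 : (1 + t) * (C N - q) ∈ T := by
    have := T.mul_mem ht' (hT (C N - q))
    convert this using 1
    linear_combination -(C N - q) * e
  have h2 : C N * (1 + t) - q ∈ T := by
    convert T.add_mem h1 (T.mul_mem ht hqT) using 1
    ring
  let S0 : Subsemiring (MvPolynomial (Fin n) ℝ) := Subsemiring.sumSq _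
  have hS0 : ∀ x, x * x ∈ S0 := fun x => by simp [S0]
  have hS0T : S0 ≤ T := by
    intro x hx
    have hx' : IsSumSq x := by simpa [S0] using hx
    induction hx' with
    | zero => exact T.zero_mem
    | sq_add a hs ih => exact T.add_mem (hT a) (ih (by simpa [S0] using hs))
  obtain ⟨M, ⟨s, hs, u, hu, e2⟩, -⟩ := bounded_of_ball (adj S0 hS0 (C N - q))
    (fun x => le_adj hS0 _ (hS0 x)) N (self_mem_adj hS0 _) t
  have h3 : (1 + t) * (C M - t) ∈ T := by
    rw [e2]
    have := T.add_mem (T.mul_mem (T.add_mem T.one_mem ht) (hS0T hs)) (T.mul_mem (hS0T hu) h1)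
    convert this using 1
    ring
  have h4 : C (M + M ^ 2 / 4) - t ∈ T := by
    have := T.add_mem h3 (hT (t - C (M / 2)))
    convert this using 1
    have e4 : (C (M + M ^ 2 / 4) : MvPolynomial (Fin n) ℝ) = C M + C (M / 2) * C (M / 2) := by
      rw [← C_mul, ← C_add]; congr 1; ring
    have e5 : (C M : MvPolynomial (Fin n) ℝ) = C (M / 2) + C (M / 2) := by
      rw [← C_add]; congr 1; ring
    rw [e4, e5]
    ring
  refine ⟨N * (1 + (M + M ^ 2 / 4)), ?_⟩
  convert T.add_mem h2 (T.mul_mem (C_mem T hT N hN0) h4) using 1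
  rw [C_mul, C_add, C_1]
  ring

theorem arch {n : ℕ} (T : Subsemiring (MvPolynomial (Fin n) ℝ)) (hT : ∀ x, x * x ∈ T)
    (H : MvPolynomial (Fin n) ℝ) (c : ℝ) (hc : C c - H ∈ T)
    (k d : Fin n → ℕ) (E : ℕ) (hE : 0 < E) (hd : ∀ i, Even (d i)) (hkd : ∀ i, d i * k i = E)
    (hwt : ∀ α ∈ H.support, ∑ i, α i * k i ≤ E)
    (hpos : ∀ y : Fin n → ℝ, y ≠ 0 →
      0 < ∑ α ∈ H.support, if ∑ i, α i * k i = E then H.coeff α * ∏ i, y i ^ α i else 0)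
    (p : MvPolynomial (Fin n) ℝ) : ∃ M : ℝ, C M - p ∈ T ∧ C M + p ∈ T := by
  set q : MvPolynomial (Fin n) ℝ := ∑ i, X i ^ 2 with hq
  have hmono : ∀ N N' : ℕ, N ≤ N' → adj T hT (q - C (N : ℝ)) ≤ adj T hT (q - C (N' : ℝ)) := by
    rintro N N' h _ ⟨s, hs, t, ht, rfl⟩
    refine ⟨s + t * C ((N' : ℝ) - N), T.add_mem hs (T.mul_mem ht (C_mem T hT _ ?_)), t, ht, ?_⟩
    · rw [sub_nonneg]; exact_mod_cast h
    · rw [C_sub]; ring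
  let Tinf : Subsemiring (MvPolynomial (Fin n) ℝ) :=
    { carrier := {z | ∃ N : ℕ, z ∈ adj T hT (q - C (N : ℝ))}
      zero_mem' := ⟨0, Subsemiring.zero_mem _⟩
      one_mem' := ⟨0, Subsemiring.one_mem _⟩
      add_mem' := by
        rintro a b ⟨N, h⟩ ⟨N', h'⟩
        exact ⟨max N N', Subsemiring.add_mem _ (hmono _ _ (le_max_left _ _) h)
          (hmono _ _ (le_max_right _ _) h')⟩
      mul_mem' := by
        rintro a b ⟨N, h⟩ ⟨N', h'⟩
        exact ⟨max N N', Subsemiring.mul_mem _ (hmono _ _ (le_max_left _ _) h)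
          (hmono _ _ (le_max_right _ _) h')⟩ }
  have hTinf : ∀ x, x ∈ T → x ∈ Tinf := fun x hx => ⟨0, le_adj hT _ hx⟩
  have hneg : -1 ∈ Tinf := by
    by_contra hcon
    obtain ⟨K, _, _, _, φ, hφ⟩ := exists_ordered_field Tinf (fun x => hTinf _ (hT x)) hcon
    let f : ℝ →+*o K :=
      { (φ.comp C : ℝ →+* K) with
        monotone' := by
          intro r s hrs
          have := hφ _ (hTinf _ (C_mem T hT (s - r) (sub_nonneg.2 hrs)))
          rw [C_sub, map_sub, sub_nonneg] at this
          exact this }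
    have h1 := infinite_contra f (fun i => φ (X i)) H k d E hE hd hkd hwt hpos (by
      intro N
      have := hφ (q - C (N : ℝ)) ⟨N, self_mem_adj hT _⟩
      rw [map_sub, sub_nonneg, hq, map_sum] at this
      simpa using this) c
    have h2 : MvPolynomial.eval₂ (f : ℝ →+* K) (fun i => φ (X i)) H = φ H := by
      have : (eval₂Hom (f : ℝ →+* K) (fun i => φ (X i))) = φ := by
        apply MvPolynomial.ringHom_ext
        · intro r; simp; rfl
        · intro i; simp
      exact congrArg (fun g : MvPolynomial (Fin n) ℝ →+* K => g H) this
    rw [h2] at h1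
    have h3 := hφ _ (hTinf _ hc)
    rw [map_sub, sub_nonneg] at h3
    exact absurd h1 (not_lt.2 h3)
  obtain ⟨N, s, hs, t, ht, e⟩ := hneg
  obtain ⟨M, hM⟩ := woermann T hT N (Nat.cast_nonneg N) s t hs ht (by linear_combination e)
  exact bounded_of_ball T hT M hM p

end SosCvx

namespace SosCvx
open Filter Topology

theorem natDegree_le_of_le (P Q : Polynomial ℝ) (h0 : ∀ t, 0 ≤ P.eval t)
    (h1 : ∀ t, P.eval t ≤ Q.eval t) : P.natDegree ≤ Q.natDegree := by
  by_contra hcon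
  push Not at hcon
  have hP : P ≠ 0 := by rintro rfl; simp at hcon
  have hd : Q.degree < P.degree := Polynomial.degree_lt_degree hcon
  have h2 := Polynomial.div_tendsto_atTop_zero_of_degree_lt Q P hd
  have h3 := Polynomial.eventually_atTop_not_isRoot P hP
  have h4 : ∀ᶠ t in atTop, 1 ≤ Q.eval t / P.eval t := by
    filter_upwards [h3] with t ht
    have : 0 < P.eval t := lt_of_le_of_ne (h0 t) (fun h => ht h.symm)
    rw [le_div_iff₀ this]
    simpa using h1 t
  have := ge_of_tendsto h2 h4
  norm_num at this

theorem tendsto_coeff (P : Polynomial ℝ) (E : ℕ) (hP : P.natDegree ≤ E) :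
    Tendsto (fun s : ℝ => P.eval s / s ^ E) atTop (𝓝 (P.coeff E)) := by
  have h1 : ∀ᶠ s : ℝ in atTop, (Polynomial.reflect E P).eval (s⁻¹) = P.eval s / s ^ E := by
    filter_upwards [eventually_gt_atTop 0] with s hs
    let _ : Invertible s := invertibleOfNonzero hs.ne'
    have := Polynomial.eval₂_reflect_mul_pow (RingHom.id ℝ) s E P hP
    rw [invOf_eq_inv] at this
    rw [eq_div_iff (by positivity)]
    simpa using this
  refine Tendsto.congr' h1 ?_
  have h2 : Tendsto (fun s : ℝ => (Polynomial.reflect E P).eval (s⁻¹)) atTop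
      (𝓝 ((Polynomial.reflect E P).eval 0)) :=
    ((Polynomial.reflect E P).continuous.tendsto 0).comp tendsto_inv_atTop_zero
  convert h2 using 2
  rw [← Polynomial.coeff_zero_eq_eval_zero, Polynomial.coeff_reflect]
  simp

theorem coeff_nonneg_of (P : Polynomial ℝ) (E : ℕ) (hP : P.natDegree ≤ E)
    (h0 : ∀ t, 0 ≤ P.eval t) : 0 ≤ P.coeff E := by
  refine ge_of_tendsto (tendsto_coeff P E hP) ?_
  filter_upwards [eventually_gt_atTop 0] with s hs
  have := h0 s
  positivity

/-- restriction of a polynomial to a monomial curve -/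
noncomputable def crv {n : ℕ} (k : Fin n → ℕ) (y : Fin n → ℝ) (H : MvPolynomial (Fin n) ℝ) :
    Polynomial ℝ :=
  MvPolynomial.aeval (fun i => Polynomial.C (y i) * Polynomial.X ^ (k i)) H

theorem eval_crv {n : ℕ} (k : Fin n → ℕ) (y : Fin n → ℝ) (H : MvPolynomial (Fin n) ℝ) (s : ℝ) :
    (crv k y H).eval s = MvPolynomial.eval (fun i => y i * s ^ k i) H := by
  unfold crv
  rw [← Polynomial.coe_evalRingHom]
  have : (Polynomial.evalRingHom s).comp (MvPolynomial.aeval (R := ℝ)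
      (fun i => Polynomial.C (y i) * Polynomial.X ^ (k i)) :
        MvPolynomial (Fin n) ℝ →ₐ[ℝ] Polynomial ℝ).toRingHom
      = MvPolynomial.eval (fun i => y i * s ^ k i) := by
    apply MvPolynomial.ringHom_ext <;> intro i <;> simp
  exact congrArg (fun g : MvPolynomial (Fin n) ℝ →+* ℝ => g H) this

theorem coeff_crv {n : ℕ} (k : Fin n → ℕ) (y : Fin n → ℝ) (H : MvPolynomial (Fin n) ℝ) (w : ℕ) :
    (crv k y H).coeff w = ∑ α ∈ H.support, if ∑ i, α i * k i = w
      then H.coeff α * ∏ i, y i ^ α i else 0 := by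
  unfold crv
  rw [MvPolynomial.aeval_def, MvPolynomial.eval₂_eq']
  rw [Polynomial.finsetSum_coeff]
  refine Finset.sum_congr rfl fun α _ => ?_
  have : (algebraMap ℝ (Polynomial ℝ)) (MvPolynomial.coeff α H) *
      ∏ i, (Polynomial.C (y i) * Polynomial.X ^ k i) ^ α i
      = Polynomial.C (H.coeff α * ∏ i, y i ^ α i) * Polynomial.X ^ (∑ i, α i * k i) := by
    rw [Polynomial.C_mul, map_prod, ← Finset.prod_pow_eq_pow_sum, mul_assoc,
      ← Finset.prod_mul_distrib]
    congr 1
    refine Finset.prod_congr rfl fun i _ => ?_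
    rw [mul_pow, ← pow_mul, Polynomial.C_pow, mul_comm (k i)]
  rw [this, Polynomial.coeff_C_mul_X_pow]
  simp only [eq_comm]

/-- degree along a line -/
noncomputable def ldeg {n : ℕ} (h : MvPolynomial (Fin n) ℝ) (v : Fin n → ℝ) : ℕ :=
  (crv (fun _ => 1) v h).natDegree

theorem eval_line {n : ℕ} (h : MvPolynomial (Fin n) ℝ) (v : Fin n → ℝ) (t : ℝ) :
    (crv (fun _ => 1) v h).eval t = MvPolynomial.eval (t • v) h := by
  rw [eval_crv]
  congr 1; congr 1
  ext i; simp [mul_comm]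

theorem natDegree_comp_CX (p : Polynomial ℝ) (c : ℝ) :
    (p.comp (Polynomial.C c * Polynomial.X)).natDegree ≤ p.natDegree := by
  refine Polynomial.natDegree_comp_le.trans ?_
  have : (Polynomial.C c * Polynomial.X : Polynomial ℝ).natDegree ≤ 1 := by
    exact (Polynomial.natDegree_C_mul_le _ _).trans Polynomial.natDegree_X_le
  nlinarith

/-- convex polynomial with strict minimum value zero at the origin -/
structure Nice {n : ℕ} (h : MvPolynomial (Fin n) ℝ) : Prop where
  cv : ConvexOn ℝ Set.univ (fun x : Fin n → ℝ => MvPolynomial.eval x h)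
  zero : MvPolynomial.eval (0 : Fin n → ℝ) h = 0
  pos : ∀ x : Fin n → ℝ, x ≠ 0 → 0 < MvPolynomial.eval x h

section
variable {n : ℕ} {h : MvPolynomial (Fin n) ℝ}

theorem nonneg (hh : Nice h) (x : Fin n → ℝ) : 0 ≤ MvPolynomial.eval x h := by
  by_cases hx : x = 0
  · rw [hx, hh.zero]
  · exact (hh.pos x hx).le

theorem ldeg_add (hh : Nice h) (u v : Fin n → ℝ) (k : ℕ) (hu : ldeg h u ≤ k) (hv : ldeg h v ≤ k) :
    ldeg h (u + v) ≤ k := by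
  let Q : Polynomial ℝ := Polynomial.C (1 / 2) *
      (crv (fun _ => 1) u h).comp (Polynomial.C 2 * Polynomial.X)
    + Polynomial.C (1 / 2) * (crv (fun _ => 1) v h).comp (Polynomial.C 2 * Polynomial.X)
  have h1 : ldeg h (u + v) ≤ Q.natDegree := by
    refine natDegree_le_of_le _ _ (fun t => ?_) (fun t => ?_)
    · rw [eval_line]; exact nonneg hh _
    · have := hh.cv.2 (Set.mem_univ ((2 * t) • u)) (Set.mem_univ ((2 * t) • v))
        (show (0 : ℝ) ≤ 1 / 2 by norm_num) (show (0 : ℝ) ≤ 1 / 2 by norm_num) (by norm_num)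
      simp only [Q, Polynomial.eval_add, Polynomial.eval_mul, Polynomial.eval_C,
        Polynomial.eval_comp, Polynomial.eval_X, eval_line]
      have e : t • (u + v) = (1 / 2 : ℝ) • (2 * t) • u + (1 / 2 : ℝ) • (2 * t) • v := by
        ext i
        simp only [Pi.smul_apply, Pi.add_apply, smul_eq_mul]
        ring
      rw [e]
      exact this
  refine h1.trans ?_
  refine (Polynomial.natDegree_add_le _ _).trans (max_le ?_ ?_)
  · exact (Polynomial.natDegree_C_mul_le _ _).trans ((natDegree_comp_CX _ _).trans hu)
  · exact (Polynomial.natDegree_C_mul_le _ _).trans ((natDegree_comp_CX _ _).trans hv)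

theorem ldeg_smul (h : MvPolynomial (Fin n) ℝ) (c : ℝ) (v : Fin n → ℝ) : ldeg h (c • v) ≤ ldeg h v := by
  refine le_trans (le_of_eq ?_) (natDegree_comp_CX (crv (fun _ => 1) v h) c)
  unfold ldeg
  congr 1
  apply Polynomial.funext
  intro t
  simp only [Polynomial.eval_comp, eval_line, Polynomial.eval_mul, Polynomial.eval_C,
    Polynomial.eval_X, smul_smul, mul_comm]

theorem ldeg_zero (hh : Nice h) : ldeg h 0 = 0 := by
  have : crv (fun _ => 1) (0 : Fin n → ℝ) h = 0 := by
    apply Polynomial.funext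
    intro t
    rw [eval_line, smul_zero, hh.zero, Polynomial.eval_zero]
  rw [ldeg, this, Polynomial.natDegree_zero]

theorem ldeg_sum (hh : Nice h) {ι : Type*} (s : Finset ι) (v : ι → Fin n → ℝ) (k : ℕ)
    (hv : ∀ i ∈ s, ldeg h (v i) ≤ k) : ldeg h (∑ i ∈ s, v i) ≤ k := by
  classical
  induction s using Finset.induction_on with
  | empty => simp [ldeg_zero hh]
  | insert a s ha ih =>
    rw [Finset.sum_insert ha]
    exact ldeg_add hh _ _ _ (hv a (Finset.mem_insert_self _ _))
      (ih fun i hi => hv i (Finset.mem_insert_of_mem hi))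

theorem ldeg_pos (hh : Nice h) (v : Fin n → ℝ) (hv : v ≠ 0) : 0 < ldeg h v := by
  by_contra hcon
  have h1 : (crv (fun _ => 1) v h).natDegree = 0 := by simpa [ldeg] using hcon
  rw [Polynomial.natDegree_eq_zero] at h1
  obtain ⟨c, hc⟩ := h1
  have e0 := eval_line h v 0
  have e1 := eval_line h v 1
  rw [← hc] at e0 e1
  simp only [Polynomial.eval_C, zero_smul, hh.zero, one_smul] at e0 e1
  have := hh.pos v hv
  linarith

theorem ldeg_even (hh : Nice h) (v : Fin n → ℝ) (hv : v ≠ 0) : Even (ldeg h v) := by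
  by_contra hcon
  rw [Nat.not_even_iff_odd] at hcon
  set p := crv (fun _ => 1) v h with hp
  have hp0 : p ≠ 0 := by
    intro h1
    have := ldeg_pos hh v hv
    rw [ldeg, ← hp, h1] at this
    simp at this
  have h1 := coeff_nonneg_of p p.natDegree le_rfl
    (fun t => by rw [hp, eval_line]; exact nonneg hh _)
  have h2 := coeff_nonneg_of (p.comp (-Polynomial.X)) p.natDegree
    (by rw [Polynomial.natDegree_comp]; simp)
    (fun t => by rw [Polynomial.eval_comp, hp, eval_line]; exact nonneg hh _)
  have h3 : (p.comp (-Polynomial.X)).coeff p.natDegree = (-1) ^ p.natDegree * p.leadingCoeff := by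
    rw [← Polynomial.comp_neg_X_leadingCoeff_eq, Polynomial.leadingCoeff]
    congr 1
    rw [Polynomial.natDegree_comp]; simp
  rw [h3, show p.natDegree = ldeg h v from rfl, hcon.neg_one_pow] at h2
  have h4 : p.leadingCoeff ≠ 0 := Polynomial.leadingCoeff_ne_zero.2 hp0
  rw [Polynomial.coeff_natDegree] at h1
  exact h4 (le_antisymm (by linarith) h1)

end

end SosCvx

namespace SosCvx
open Filter Topology

section
variable {n : ℕ} {h : MvPolynomial (Fin n) ℝ}

theorem exists_basis (h : MvPolynomial (Fin n) ℝ) :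
    ∃ b : Module.Basis (Fin n) ℝ (Fin n → ℝ), ∀ i v, b.repr v i ≠ 0 → ldeg h (b i) ≤ ldeg h v := by
  classical
  obtain ⟨b, -, hb⟩ := WellFounded.has_min
    (measure (fun b : Module.Basis (Fin n) ℝ (Fin n → ℝ) => ∑ i, ldeg h (b i))).wf Set.univ
    ⟨Pi.basisFun ℝ (Fin n), trivial⟩
  refine ⟨b, fun i v hv => ?_⟩
  by_contra hcon
  push Not at hcon
  have hli : LinearIndependent ℝ (Function.update b i v) := by
    refine b.linearIndependent.update i v ⟨1, one_mem _, b.repr v, ?_, ?_⟩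
    · exact mem_nonZeroDivisors_of_ne_zero hv
    · rw [one_smul, b.linearCombination_repr]
  let b' := basisOfLinearIndependentOfCardEqFinrank' _ hli (by simp)
  have hb' : ⇑b' = Function.update b i v := by simp [b']
  apply hb b' trivial
  change ∑ j, ldeg h (b' j) < ∑ j, ldeg h (b j)
  rw [hb']
  refine Finset.sum_lt_sum (fun j _ => ?_) ⟨i, Finset.mem_univ _, by simpa using hcon⟩
  by_cases hj : j = i
  · subst hj; simpa using hcon.le
  · rw [Function.update_of_ne hj]

/-- linear change of coordinates -/
noncomputable def chg (b : Fin n → Fin n → ℝ) :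
    MvPolynomial (Fin n) ℝ →ₐ[ℝ] MvPolynomial (Fin n) ℝ :=
  MvPolynomial.aeval (fun j => ∑ i, MvPolynomial.C (b i j) * MvPolynomial.X i)

theorem eval_chg (b : Fin n → Fin n → ℝ) (y : Fin n → ℝ) (h : MvPolynomial (Fin n) ℝ) :
    MvPolynomial.eval y (chg b h) = MvPolynomial.eval (∑ i, y i • b i) h := by
  have : (MvPolynomial.eval y).comp (chg b).toRingHom = MvPolynomial.eval (∑ i, y i • b i) := by
    apply MvPolynomial.ringHom_ext
    · intro r; simp [chg]
    · intro i; simp [chg, mul_comm]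
  exact congrArg (fun g : MvPolynomial (Fin n) ℝ →+* ℝ => g h) this

theorem nice_chg (hh : Nice h) (b : Module.Basis (Fin n) ℝ (Fin n → ℝ)) : Nice (chg b h) where
  cv := by
    have := hh.cv.comp_linearMap (b.equivFun.symm : (Fin n → ℝ) →ₗ[ℝ] (Fin n → ℝ))
    rw [Set.preimage_univ] at this
    have e : (fun x : Fin n → ℝ => MvPolynomial.eval x (chg b h)) =
        (fun x => MvPolynomial.eval x h) ∘ (b.equivFun.symm : (Fin n → ℝ) →ₗ[ℝ] (Fin n → ℝ)) := by
      funext y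
      rw [eval_chg, ← Module.Basis.equivFun_symm_apply]
      rfl
    rw [e]
    exact this
  zero := by
    rw [eval_chg]
    simp only [Pi.zero_apply, zero_smul, Finset.sum_const_zero]
    exact hh.zero
  pos := by
    intro y hy
    rw [eval_chg]
    apply hh.pos
    rw [← Module.Basis.equivFun_symm_apply]
    exact fun h0 => hy (b.equivFun.symm.map_eq_zero_iff.1 h0)

theorem crv_bound (hh : Nice h) (b : Module.Basis (Fin n) ℝ (Fin n → ℝ)) (k : Fin n → ℕ) (E : ℕ)
    (hkd : ∀ i, ldeg h (b i) * k i = E) (y : Fin n → ℝ) :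
    (crv k y (chg b h)).natDegree ≤ E := by
  have hE := nice_chg hh b
  rcases Nat.eq_zero_or_pos n with hn | hn
  · subst hn
    have : crv k y (chg b h) = 0 := by
      apply Polynomial.funext
      intro s
      rw [eval_crv, Polynomial.eval_zero, ← hE.zero]
      congr 2
      exact Subsingleton.elim _ _
    rw [this]; simp
  have hn' : (0 : ℝ) < n := by exact_mod_cast hn
  let Q : Polynomial ℝ := ∑ i, Polynomial.C ((1 : ℝ) / n) *
    (crv (fun _ => 1) (b i) h).comp (Polynomial.C (n * y i) * Polynomial.X ^ k i)
  refine (natDegree_le_of_le _ Q (fun t => ?_) (fun t => ?_)).trans ?_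
  · rw [eval_crv]; exact nonneg hE _
  · rw [eval_crv, eval_chg]
    have := hh.cv.map_sum_le (t := Finset.univ) (w := fun _ : Fin n => (1 : ℝ) / n)
      (p := fun i => (n * y i * t ^ k i) • b i) (fun i _ => by positivity)
      (by simp [hn'.ne']) (fun i _ => Set.mem_univ _)
    simp only [Q, Polynomial.eval_finsetSum, Polynomial.eval_mul, Polynomial.eval_C,
      Polynomial.eval_comp, Polynomial.eval_X, Polynomial.eval_pow, eval_line]
    refine le_trans (le_of_eq ?_) this
    congr 2
    refine Finset.sum_congr rfl fun i _ => ?_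
    rw [smul_smul]
    congr 1
    field_simp
  · refine Polynomial.natDegree_sum_le_of_forall_le _ _ fun i _ => ?_
    refine (Polynomial.natDegree_C_mul_le _ _).trans (Polynomial.natDegree_comp_le.trans ?_)
    rw [← hkd i]
    exact Nat.mul_le_mul le_rfl (Polynomial.natDegree_C_mul_X_pow_le _ _)

theorem weight_le (hh : Nice h) (b : Module.Basis (Fin n) ℝ (Fin n → ℝ)) (k : Fin n → ℕ) (E : ℕ)
    (hkd : ∀ i, ldeg h (b i) * k i = E) :
    ∀ α ∈ (chg b h).support, ∑ i, α i * k i ≤ E := by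
  intro α hα
  by_contra hcon
  push Not at hcon
  set H := chg b h with hH
  set w := ∑ i, α i * k i with hw
  let W : MvPolynomial (Fin n) ℝ := ∑ β ∈ H.support, if ∑ i, β i * k i = w
    then MvPolynomial.monomial β (H.coeff β) else 0
  have h1 : W = 0 := by
    apply MvPolynomial.funext
    intro y
    have h2 : (crv k y H).coeff w = 0 := Polynomial.coeff_eq_zero_of_natDegree_lt
      ((crv_bound hh b k E hkd y).trans_lt hcon)
    rw [coeff_crv] at h2
    rw [map_zero, ← h2, map_sum]
    refine Finset.sum_congr rfl fun β _ => ?_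
    split_ifs
    · rw [MvPolynomial.eval_monomial, Finsupp.prod_fintype _ _ (by simp)]
    · simp
  have h3 : W.coeff α = H.coeff α := by
    simp only [W, MvPolynomial.coeff_sum]
    rw [Finset.sum_eq_single α]
    · simp [hw]
    · intro β _ hβ
      split_ifs
      · simp [hβ]
      · simp
    · intro h; exact absurd hα h
  rw [h1] at h3
  exact (MvPolynomial.mem_support_iff.1 hα) (by simpa using h3.symm)

end
end SosCvx

namespace SosCvx
open Filter Topology

section
variable {n : ℕ} {h : MvPolynomial (Fin n) ℝ}

theorem continuous_coeff_crv (k : Fin n → ℕ) (H : MvPolynomial (Fin n) ℝ) (w : ℕ) :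
    Continuous (fun y => (crv k y H).coeff w) := by
  simp only [coeff_crv]
  refine continuous_finsetSum _ fun α _ => ?_
  split_ifs
  · fun_prop
  · exact continuous_const

theorem lead_pos (hh : Nice h) (b : Module.Basis (Fin n) ℝ (Fin n → ℝ))
    (hb : ∀ i v, b.repr v i ≠ 0 → ldeg h (b i) ≤ ldeg h v) (k : Fin n → ℕ) (E : ℕ) (hE : 0 < E)
    (hkd : ∀ i, ldeg h (b i) * k i = E) (y : Fin n → ℝ) (hy : y ≠ 0) :
    0 < (crv k y (chg b h)).coeff E := by
  classical
  have hN := nice_chg hh b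
  have hdeg := crv_bound hh b k E hkd
  set H := chg b h with hH
  have hk : ∀ i, 0 < k i := fun i => Nat.pos_of_ne_zero fun h0 => by
    have := hkd i
    rw [h0, mul_zero] at this
    omega
  have nn : ∀ y, 0 ≤ (crv k y H).coeff E := fun y =>
    coeff_nonneg_of _ E (hdeg y) fun t => by rw [eval_crv]; exact nonneg hN _
  have cv : ∀ (a : ℝ) (y : Fin n → ℝ), 0 ≤ a → a ≤ 1 →
      (crv k (a • y) H).coeff E ≤ a * (crv k y H).coeff E := by
    intro a y ha ha1
    refine le_of_tendsto_of_tendsto (tendsto_coeff _ E (hdeg (a • y)))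
      ((tendsto_coeff _ E (hdeg y)).const_mul a) ?_
    filter_upwards [eventually_gt_atTop 0] with s hs
    rw [← mul_div_assoc]
    refine div_le_div_of_nonneg_right ?_ (by positivity)
    rw [eval_crv, eval_crv]
    have := hN.cv.2 (Set.mem_univ (fun i => y i * s ^ k i)) (Set.mem_univ 0) ha
      (sub_nonneg.2 ha1) (by ring)
    simp only [hN.zero, smul_zero, add_zero, smul_eq_mul, mul_zero] at this
    convert this using 3
    ext i
    simp [mul_assoc]
  have dil : ∀ (s : ℝ) (y : Fin n → ℝ),
      (crv k (fun i => y i * s ^ k i) H).coeff E = (crv k y H).coeff E * s ^ E := by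
    intro s y
    rw [← Polynomial.comp_C_mul_X_coeff]
    congr 1
    apply Polynomial.funext
    intro t
    simp only [eval_crv, Polynomial.eval_comp, Polynomial.eval_mul, Polynomial.eval_C,
      Polynomial.eval_X, mul_pow, mul_assoc]
  by_contra hcon
  have hy0 : (crv k y H).coeff E = 0 := le_antisymm (not_lt.1 hcon) (nn y)
  obtain ⟨i1, hi1⟩ := Function.ne_iff.1 hy
  obtain ⟨i0, hi0, hmax⟩ := Finset.exists_max_image (Finset.univ.filter fun i => y i ≠ 0) k
    ⟨i1, by simpa using hi1⟩
  simp only [Finset.mem_filter, Finset.mem_univ, true_and] at hi0 hmax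
  set K := k i0 with hK
  let z : Fin n → ℝ := fun i => if k i = K then y i else 0
  have hz : (crv k z H).coeff E ≤ 0 := by
    have ht : Tendsto (fun s : ℝ => (s ^ K)⁻¹ • (fun i => y i * s ^ k i)) atTop (𝓝 z) := by
      rw [tendsto_pi_nhds]
      intro i
      simp only [Pi.smul_apply, smul_eq_mul, z]
      by_cases hyi : y i = 0
      · simp [hyi]
      rcases (hmax i hyi).lt_or_eq with hlt | heq
      · rw [if_neg hlt.ne]
        have := (tendsto_pow_div_pow_atTop_zero (𝕜 := ℝ) hlt).const_mul (y i)
        rw [mul_zero] at this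
        refine this.congr fun s => ?_
        rw [div_eq_mul_inv]; ring
      · rw [if_pos heq]
        refine tendsto_const_nhds.congr' ?_
        filter_upwards [eventually_gt_atTop 0] with s hs
        rw [heq]
        field_simp
    refine le_of_tendsto (((continuous_coeff_crv k H E).tendsto z).comp ht) ?_
    filter_upwards [eventually_ge_atTop 1] with s hs
    have := cv ((s ^ K)⁻¹) (fun i => y i * s ^ k i) (by positivity)
      (inv_le_one_of_one_le₀ (one_le_pow₀ hs))
    rw [dil, hy0] at this
    simpa using this
  have hz0 := le_antisymm hz (nn z)
  set v := ∑ i, z i • b i with hv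
  have hexp : crv k z H = Polynomial.expand ℝ K (crv (fun _ => 1) v h) := by
    apply Polynomial.funext
    intro s
    rw [eval_crv, Polynomial.expand_eval, eval_line, hH, eval_chg, hv, Finset.smul_sum]
    congr 2
    refine Finset.sum_congr rfl fun i _ => ?_
    simp only [z]
    split_ifs with hi
    · rw [hi, smul_smul, mul_comm]
    · simp
  rw [hexp, ← hkd i0, ← hK, Polynomial.coeff_expand_mul (hk i0)] at hz0
  have hd1 : ldeg h v ≤ ldeg h (b i0) := by
    refine ldeg_sum hh _ _ _ fun i _ => ?_
    simp only [z]
    split_ifs with hi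
    · refine (ldeg_smul h _ _).trans (le_of_eq ?_)
      have := (hkd i).trans (hkd i0).symm
      rw [hi] at this
      exact Nat.eq_of_mul_eq_mul_right (hk i0) this
    · rw [zero_smul, ldeg_zero hh]; exact Nat.zero_le _
  have hd2 : ldeg h (b i0) ≤ ldeg h v := by
    apply hb
    rw [hv, b.repr_sum_self]
    simpa [z, hK] using hi0
  have hd : ldeg h v = ldeg h (b i0) := le_antisymm hd1 hd2
  rw [← hd] at hz0
  have h5 : crv (fun _ => 1) v h = 0 := Polynomial.leadingCoeff_eq_zero.1 hz0
  have h6 : ldeg h v = 0 := by rw [ldeg, h5, Polynomial.natDegree_zero]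
  have := hkd i0
  rw [← hd, h6] at this
  omega

theorem arch' (hh : Nice h) (T : Subsemiring (MvPolynomial (Fin n) ℝ)) (hT : ∀ x, x * x ∈ T)
    (c : ℝ) (hc : MvPolynomial.C c - h ∈ T) (p : MvPolynomial (Fin n) ℝ) :
    ∃ M : ℝ, MvPolynomial.C M - p ∈ T ∧ MvPolynomial.C M + p ∈ T := by
  obtain ⟨b, hb⟩ := exists_basis h
  let E := ∏ i, ldeg h (b i)
  have hd : ∀ i, 0 < ldeg h (b i) := fun i => ldeg_pos hh _ (b.ne_zero i)
  have hE : 0 < E := Finset.prod_pos fun i _ => hd i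
  let k : Fin n → ℕ := fun i => E / ldeg h (b i)
  have hkd : ∀ i, ldeg h (b i) * k i = E := fun i =>
    Nat.mul_div_cancel' (Finset.dvd_prod_of_mem _ (Finset.mem_univ i))
  let b' : Fin n → Fin n → ℝ := fun l => b.equivFun (Pi.single l 1)
  have inv : ∀ q, chg b' (chg b q) = q := by
    intro q
    apply MvPolynomial.funext
    intro x
    rw [eval_chg, eval_chg]
    congr 2
    have e : ∑ l, x l • b' l = b.equivFun x := by
      simp only [b', ← map_smul, ← map_sum]
      congr 1
      ext j
      simp [Finset.sum_apply, Pi.single_apply]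
    rw [e, ← Module.Basis.equivFun_symm_apply, LinearEquiv.symm_apply_apply]
  have := arch (T.comap (chg b').toRingHom) (fun x => by
      change chg b' (x * x) ∈ T
      rw [map_mul]; exact hT _) (chg b h) c (by
      change chg b' (MvPolynomial.C c - chg b h) ∈ T
      rw [map_sub, inv]
      simpa [chg] using hc) k (fun i => ldeg h (b i)) E hE
      (fun i => ldeg_even hh _ (b.ne_zero i)) hkd (weight_le hh b k E hkd)
      (fun y hy => by rw [← coeff_crv]; exact lead_pos hh b hb k E hE hkd y hy) (chg b p)
  obtain ⟨M, h1, h2⟩ := this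
  have hCM : chg b' (MvPolynomial.C M) = MvPolynomial.C M := by simp [chg]
  refine ⟨M, ?_, ?_⟩
  · change chg b' (MvPolynomial.C M - chg b p) ∈ T at h1
    rwa [map_sub, inv, hCM] at h1
  · change chg b' (MvPolynomial.C M + chg b p) ∈ T at h2
    rwa [map_add, inv, hCM] at h2

end
end SosCvx

namespace SosCvx
open Filter Topology MvPolynomial

section
variable {n : ℕ}

/-- restriction to an affine line -/
noncomputable def lin (a y : Fin n → ℝ) : MvPolynomial (Fin n) ℝ →ₐ[ℝ] Polynomial ℝ :=
  aeval (fun i => Polynomial.C (a i) + Polynomial.C (y i) * Polynomial.X)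

theorem eval_lin (a y : Fin n → ℝ) (h : MvPolynomial (Fin n) ℝ) (t : ℝ) :
    (lin a y h).eval t = eval (a + t • y) h := by
  have : (Polynomial.evalRingHom t).comp (lin a y).toRingHom = eval (a + t • y) := by
    apply MvPolynomial.ringHom_ext
    · intro i; simp [lin]
    · intro i; simp [lin]; ring
  exact congrArg (fun g : MvPolynomial (Fin n) ℝ →+* ℝ => g h) this

theorem derivative_lin (a y : Fin n → ℝ) (h : MvPolynomial (Fin n) ℝ) :
    (lin a y h).derivative = ∑ i, Polynomial.C (y i) * lin a y (pderiv i h) := by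
  induction h using MvPolynomial.induction_on with
  | C r => simp [lin]
  | add p q hp hq =>
    simp only [map_add, hp, hq, mul_add, Finset.sum_add_distrib]
  | mul_X p j hp =>
    have hX : lin a y (X j) = Polynomial.C (a j) + Polynomial.C (y j) * Polynomial.X := by
      simp [lin]
    have e : ∀ i, Polynomial.C (y i) * lin a y (pderiv i (p * X j)) =
        Polynomial.C (y i) * lin a y (pderiv i p) * lin a y (X j) +
        (if i = j then Polynomial.C (y i) * lin a y p else 0) := by
      intro i
      rw [Derivation.leibniz, pderiv_X]
      by_cases hij : i = j
      · subst hij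
        simp only [Pi.single_eq_same, smul_eq_mul, map_add, map_mul, map_one, if_true]
        ring
      · rw [Pi.single_eq_of_ne (Ne.symm hij), if_neg hij]
        simp only [smul_eq_mul, map_add, map_mul, map_zero]
        ring
    simp only [e, Finset.sum_add_distrib, ← Finset.sum_mul, ← hp]
    rw [map_mul, Polynomial.derivative_mul, hX]
    simp
    ring

theorem derivative2_lin (a y : Fin n → ℝ) (h : MvPolynomial (Fin n) ℝ) :
    (lin a y h).derivative.derivative =
      ∑ i, ∑ j, Polynomial.C (y i * y j) * lin a y (pderiv j (pderiv i h)) := by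
  rw [derivative_lin, Polynomial.derivative_sum]
  refine Finset.sum_congr rfl fun i _ => ?_
  rw [Polynomial.derivative_C_mul, derivative_lin, Finset.mul_sum]
  refine Finset.sum_congr rfl fun j _ => ?_
  rw [Polynomial.C_mul, mul_assoc]

theorem coeff_two_nonneg (r : Polynomial ℝ) (hr : ∀ t, 2 * r.eval 0 ≤ r.eval t + r.eval (-t)) :
    0 ≤ r.coeff 2 := by
  set w := r.divX.divX with hw
  have e : ∀ t, r.eval t = w.eval t * t ^ 2 + r.coeff 1 * t + r.eval 0 := by
    intro t
    have h1 := congrArg (Polynomial.eval t) (Polynomial.divX_mul_X_add r)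
    have h2 := congrArg (Polynomial.eval t) (Polynomial.divX_mul_X_add r.divX)
    simp only [Polynomial.eval_add, Polynomial.eval_mul, Polynomial.eval_X, Polynomial.eval_C,
      Polynomial.coeff_divX, zero_add] at h1 h2
    rw [← Polynomial.coeff_zero_eq_eval_zero, ← h1, ← h2]
    ring
  have h0 : w.eval 0 = r.coeff 2 := by
    rw [← Polynomial.coeff_zero_eq_eval_zero, hw, Polynomial.coeff_divX, Polynomial.coeff_divX]
  have hc : Continuous (fun t => w.eval t + w.eval (-t)) := by fun_prop
  have ht : Tendsto (fun t => w.eval t + w.eval (-t)) (𝓝[≠] 0) (𝓝 (w.eval 0 + w.eval (-0))) :=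
    (hc.tendsto 0).mono_left nhdsWithin_le_nhds
  have : 0 ≤ w.eval 0 + w.eval (-0) := by
    refine ge_of_tendsto ht ?_
    filter_upwards [self_mem_nhdsWithin] with t ht
    have h3 := hr t
    rw [e t, e (-t)] at h3
    have h4 : 0 < t ^ 2 := by
      have : t ≠ 0 := ht
      positivity
    by_contra hcon
    nlinarith
  rw [neg_zero, h0] at this
  linarith

theorem hess_nonneg (h : MvPolynomial (Fin n) ℝ)
    (hcv : ConvexOn ℝ Set.univ (fun x : Fin n → ℝ => eval x h)) (x y : Fin n → ℝ) :
    0 ≤ ∑ i, ∑ j, y i * y j * eval x (pderiv j (pderiv i h)) := by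
  have h1 : (lin x y h).derivative.derivative.eval 0 =
      ∑ i, ∑ j, y i * y j * eval x (pderiv j (pderiv i h)) := by
    rw [derivative2_lin]
    simp [Polynomial.eval_finsetSum, eval_lin]
  rw [← h1, ← Polynomial.coeff_zero_eq_eval_zero, Polynomial.coeff_derivative,
    Polynomial.coeff_derivative]
  have h2 : 0 ≤ (lin x y h).coeff 2 := by
    apply coeff_two_nonneg
    intro t
    rw [eval_lin, eval_lin, eval_lin]
    have := hcv.2 (Set.mem_univ (x + t • y)) (Set.mem_univ (x + (-t) • y))
        (show (0 : ℝ) ≤ 1 / 2 by norm_num) (show (0 : ℝ) ≤ 1 / 2 by norm_num) (by norm_num)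
    have e : (1 / 2 : ℝ) • (x + t • y) + (1 / 2 : ℝ) • (x + (-t) • y) = x + (0 : ℝ) • y := by
      ext i
      simp only [Pi.smul_apply, Pi.add_apply, smul_eq_mul]
      ring
    rw [e] at this
    simp only [smul_eq_mul] at this
    linarith
  norm_num
  positivity

/-- weighted integral functional -/
noncomputable def wint (q : Polynomial ℝ) : ℝ := ∫ t in (0 : ℝ)..1, (1 - t) * q.eval t

theorem wint_add (p q : Polynomial ℝ) : wint (p + q) = wint p + wint q := by
  unfold wint
  rw [← intervalIntegral.integral_add]
  · simp only [Polynomial.eval_add, mul_add]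
  · exact Continuous.intervalIntegrable (by fun_prop) _ _
  · exact Continuous.intervalIntegrable (by fun_prop) _ _

theorem wint_C_mul (a : ℝ) (q : Polynomial ℝ) : wint (Polynomial.C a * q) = a * wint q := by
  unfold wint
  rw [← intervalIntegral.integral_const_mul]
  congr 1
  ext t
  simp only [Polynomial.eval_mul, Polynomial.eval_C]
  ring

theorem wint_zero : wint 0 = 0 := by simp [wint]

theorem wint_sum {ι : Type*} (s : Finset ι) (q : ι → Polynomial ℝ) :
    wint (∑ i ∈ s, q i) = ∑ i ∈ s, wint (q i) := by
  classical
  induction s using Finset.induction_on with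
  | empty => simp [wint_zero]
  | insert a s ha ih => rw [Finset.sum_insert ha, Finset.sum_insert ha, wint_add, ih]

theorem wint_derivative2 (p : Polynomial ℝ) :
    wint p.derivative.derivative = p.eval 1 - p.eval 0 - p.derivative.eval 0 := by
  unfold wint
  rw [intervalIntegral.integral_eq_sub_of_hasDerivAt
    (f := fun t => (1 - t) * p.derivative.eval t + p.eval t)]
  · ring
  · intro t _
    have := (((hasDerivAt_id t).const_sub 1).mul (p.derivative.hasDerivAt t)).add (p.hasDerivAt t)
    refine (this.congr_deriv ?_)
    simp only [id]
    ring
  · exact Continuous.intervalIntegrable (by fun_prop) _ _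

theorem wint_pos (q : Polynomial ℝ) (h0 : ∀ t, 0 ≤ q.eval t) (h1 : 0 < q.eval 0) : 0 < wint q := by
  unfold wint
  refine intervalIntegral.integral_pos zero_lt_one (by fun_prop) ?_ ⟨0, by simp, by simpa using h1⟩
  intro t ht
  exact mul_nonneg (by linarith [ht.2]) (h0 t)

theorem exists_J (q : MvPolynomial (Fin n) ℝ) :
    ∃ J : MvPolynomial (Fin n) ℝ, ∀ x, eval x J = wint (lin 0 x q) := by
  induction q using MvPolynomial.induction_on' with
  | monomial α a =>
    refine ⟨monomial α (a * wint (Polynomial.X ^ (∑ i, α i))), fun x => ?_⟩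
    have : lin 0 x (monomial α a) =
        Polynomial.C (a * ∏ i, x i ^ α i) * Polynomial.X ^ (∑ i, α i) := by
      apply Polynomial.funext
      intro t
      rw [eval_lin, eval_monomial, Finsupp.prod_fintype _ _ (by simp)]
      simp only [zero_add, Pi.smul_apply, smul_eq_mul, mul_pow, Finset.prod_mul_distrib,
        Finset.prod_pow_eq_pow_sum, Polynomial.eval_mul, Polynomial.eval_C, Polynomial.eval_pow,
        Polynomial.eval_X]
      ring
    rw [this, wint_C_mul, eval_monomial, Finsupp.prod_fintype _ _ (by simp)]
    ring
  | add p q hp hq =>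
    obtain ⟨J1, h1⟩ := hp
    obtain ⟨J2, h2⟩ := hq
    exact ⟨J1 + J2, fun x => by rw [map_add, map_add, wint_add, h1, h2]⟩

theorem exists_matrix (h : MvPolynomial (Fin n) ℝ)
    (hcv : ConvexOn ℝ Set.univ (fun x : Fin n → ℝ => eval x h))
    (h0 : eval (0 : Fin n → ℝ) h = 0) (h1 : ∀ i, eval (0 : Fin n → ℝ) (pderiv i h) = 0)
    (hPD : ∀ y : Fin n → ℝ, y ≠ 0 →
      0 < ∑ i, ∑ j, y i * y j * eval (0 : Fin n → ℝ) (pderiv j (pderiv i h))) :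
    ∃ A : Fin n → Fin n → MvPolynomial (Fin n) ℝ, h = ∑ i, ∑ j, X i * X j * A i j ∧
      ∀ x y : Fin n → ℝ, y ≠ 0 → 0 < ∑ i, ∑ j, y i * y j * eval x (A i j) := by
  choose J hJ using fun q : MvPolynomial (Fin n) ℝ => exists_J q
  have key : ∀ x y : Fin n → ℝ, ∑ i, ∑ j, y i * y j * eval x (J (pderiv j (pderiv i h))) =
      wint (∑ i, ∑ j, Polynomial.C (y i * y j) * lin 0 x (pderiv j (pderiv i h))) := by
    intro x y
    simp only [wint_sum, wint_C_mul, hJ]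
  refine ⟨fun i j => J (pderiv j (pderiv i h)), ?_, fun x y hy => ?_⟩
  · apply MvPolynomial.funext
    intro x
    have := key x x
    rw [← derivative2_lin, wint_derivative2, derivative_lin] at this
    simp only [eval_lin, Polynomial.eval_finsetSum, Polynomial.eval_mul, Polynomial.eval_C,
      zero_smul, one_smul, zero_add, h0, h1, mul_zero, Finset.sum_const_zero, sub_zero] at this
    simp only [map_sum, map_mul, eval_X]
    exact this.symm
  · rw [key]
    apply wint_pos
    · intro t
      simp only [eval_lin, Polynomial.eval_finsetSum, Polynomial.eval_mul, Polynomial.eval_C]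
      exact hess_nonneg h hcv _ y
    · simp only [eval_lin, Polynomial.eval_finsetSum, Polynomial.eval_mul, Polynomial.eval_C,
        zero_smul, zero_add]
      exact hPD y hy

theorem nice_of (h : MvPolynomial (Fin n) ℝ)
    (hcv : ConvexOn ℝ Set.univ (fun x : Fin n → ℝ => eval x h))
    (A : Fin n → Fin n → MvPolynomial (Fin n) ℝ) (hA : h = ∑ i, ∑ j, X i * X j * A i j)
    (hpos : ∀ x y : Fin n → ℝ, y ≠ 0 → 0 < ∑ i, ∑ j, y i * y j * eval x (A i j)) : Nice h where
  cv := hcv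
  zero := by rw [hA]; simp only [map_sum, map_mul, eval_X]; simp
  pos := fun x hx => by rw [hA]; simpa only [map_sum, map_mul, eval_X] using hpos x x hx

end
end SosCvx

namespace SosCvx
open Filter Topology MvPolynomial

theorem bern_uni {A : Type*} [CommRing A] (x : A) (a m : ℕ) :
    ∑ k ∈ Finset.range (a + m + 1), (k.choose a : A) *
      (((a + m).choose k : A) * x ^ k * (1 - x) ^ (a + m - k)) = ((a + m).choose a : A) * x ^ a := by
  rw [add_assoc, Finset.sum_range_add, Finset.sum_eq_zero, zero_add]
  · have h1 : (1 : A) = ∑ j ∈ Finset.range (m + 1), x ^ j * (1 - x) ^ (m - j) * (m.choose j : A) := by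
      rw [← add_pow]; simp
    conv_rhs => rw [← mul_one (((a + m).choose a : A) * x ^ a), h1, Finset.mul_sum]
    refine Finset.sum_congr rfl fun j hj => ?_
    have hj' : j ≤ m := Nat.lt_succ_iff.1 (Finset.mem_range.1 hj)
    have h2 : ((a + m).choose (a + j) : A) * ((a + j).choose a : A) =
        ((a + m).choose a : A) * (m.choose j : A) := by
      have := Nat.choose_mul (n := a + m) (k := a + j) (s := a) (by omega)
      rw [Nat.add_sub_cancel_left, Nat.add_sub_cancel_left] at this
      have := congrArg (Nat.cast : ℕ → A) this
      rwa [Nat.cast_mul, Nat.cast_mul] at this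
    rw [show a + m - (a + j) = m - j by omega, pow_add]
    linear_combination (x ^ a * x ^ j * (1 - x) ^ (m - j)) * h2
  · intro k hk
    rw [Nat.choose_eq_zero_of_lt (Finset.mem_range.1 hk)]
    simp

/-- Bernstein coefficient of a power -/
noncomputable def bw (d a k : ℕ) : ℝ := (k.choose a : ℝ) / (d.choose a : ℝ)

theorem bw_abs (d a k : ℕ) (hk : k ≤ d) : |bw d a k| ≤ 1 := by
  unfold bw
  rw [abs_of_nonneg (by positivity)]
  apply div_le_one_of_le₀ _ (by positivity)
  exact_mod_cast Nat.choose_le_choose a hk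

theorem bw_succ (d a k : ℕ) (h : a < d) :
    bw d (a + 1) k = bw d a k * (((k : ℝ) - a) / ((d : ℝ) - a)) := by
  unfold bw
  have h1 : ∀ m : ℕ, (m.choose (a + 1) : ℝ) * (a + 1) = m.choose a * ((m : ℝ) - a) := by
    intro m
    rcases le_or_gt a m with hm | hm
    · have := Nat.choose_succ_right_eq m a
      rw [← Nat.cast_sub hm]
      exact_mod_cast this
    · rw [Nat.choose_eq_zero_of_lt hm, Nat.choose_eq_zero_of_lt (by omega)]
      simp
  have h2 : (0 : ℝ) < d.choose a := by exact_mod_cast Nat.choose_pos h.le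
  have h3 : (0 : ℝ) < d.choose (a + 1) := by exact_mod_cast Nat.choose_pos h
  have h4 : (0 : ℝ) < (d : ℝ) - a := by rw [sub_pos]; exact_mod_cast h
  rw [div_mul_div_comm, div_eq_div_iff h3.ne' (by positivity)]
  have e1 := h1 k
  have e2 := h1 d
  have : ((a : ℝ) + 1) ≠ 0 := by positivity
  apply mul_right_cancel₀ this
  linear_combination ((d.choose a : ℝ) * ((d : ℝ) - a)) * e1
    - ((k.choose a : ℝ) * ((k : ℝ) - a)) * e2

section
variable (n : ℕ)

/-- the filter of large Bernstein degrees -/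
def bfil : Filter (ℕ × (Fin n → ℕ)) := (atTop.comap Prod.fst) ⊓ 𝓟 {p | ∀ i, p.2 i ≤ p.1}

theorem bfil_le : ∀ᶠ p in bfil n, ∀ i, p.2 i ≤ p.1 :=
  mem_inf_of_right (mem_principal_self _)

theorem bfil_fst : Tendsto Prod.fst (bfil n) atTop := tendsto_comap.mono_left inf_le_left

variable {n}

theorem bw_tendsto (i : Fin n) (a : ℕ) :
    Tendsto (fun p : ℕ × (Fin n → ℕ) => bw p.1 a (p.2 i) - ((p.2 i : ℝ) / p.1) ^ a)
      (bfil n) (𝓝 0) := by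
  induction a with
  | zero => simpa [bw] using tendsto_const_nhds
  | succ a ih =>
    have h1 : Tendsto (fun p : ℕ × (Fin n → ℕ) => ((p.2 i : ℝ) - a) / ((p.1 : ℝ) - a)
        - (p.2 i : ℝ) / p.1) (bfil n) (𝓝 0) := by
      have h2 : Tendsto (fun p : ℕ × (Fin n → ℕ) => (a : ℝ) / ((p.1 : ℝ) - a)) (bfil n) (𝓝 0) := by
        apply Tendsto.const_div_atTop
        apply tendsto_atTop_add_const_right
        exact tendsto_natCast_atTop_atTop.comp (bfil_fst n)
      refine squeeze_zero_norm' ?_ h2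
      filter_upwards [bfil_le n, (bfil_fst n).eventually_gt_atTop a] with p hp hpa
      have h4 : (0 : ℝ) < (p.1 : ℝ) - a := by rw [sub_pos]; exact_mod_cast hpa
      have h5 : (0 : ℝ) < p.1 := by exact_mod_cast (Nat.zero_le a).trans_lt hpa
      have h6 : (p.2 i : ℝ) ≤ p.1 := by exact_mod_cast hp i
      have h7 : (0 : ℝ) ≤ p.2 i := Nat.cast_nonneg _
      have e : ((p.2 i : ℝ) - a) / ((p.1 : ℝ) - a) - (p.2 i : ℝ) / p.1 =
          - ((a : ℝ) / ((p.1 : ℝ) - a) * (1 - (p.2 i : ℝ) / p.1)) := by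
        field_simp
        ring
      rw [e, norm_neg, Real.norm_eq_abs, abs_of_nonneg]
      · have : (0 : ℝ) ≤ a / ((p.1 : ℝ) - a) := by positivity
        have : 0 ≤ (p.2 i : ℝ) / p.1 := by positivity
        nlinarith
      · have : (p.2 i : ℝ) / p.1 ≤ 1 := div_le_one_of_le₀ h6 h5.le
        have : 0 ≤ 1 - (p.2 i : ℝ) / p.1 := by linarith
        positivity
    have h3 := (bdd_le_mul_tendsto_zero' 1 (f := fun p : ℕ × (Fin n → ℕ) => bw p.1 a (p.2 i)) (by
      filter_upwards [bfil_le n] with p hp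
      exact bw_abs _ _ _ (hp i)) h1)
    have h4 := (bdd_le_mul_tendsto_zero' 1
      (f := fun p : ℕ × (Fin n → ℕ) => (p.2 i : ℝ) / p.1) (by
      filter_upwards [bfil_le n] with p hp
      rw [abs_of_nonneg (by positivity)]
      exact div_le_one_of_le₀ (by exact_mod_cast hp i) (by positivity)) ih)
    have h5 := h3.add h4
    rw [add_zero] at h5
    refine h5.congr' ?_
    filter_upwards [(bfil_fst n).eventually_gt_atTop a] with p hpa
    rw [bw_succ _ _ _ hpa]
    ring

theorem bw_prod_tendsto (s : Finset (Fin n)) (α : Fin n → ℕ) :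
    Tendsto (fun p : ℕ × (Fin n → ℕ) => ∏ i ∈ s, bw p.1 (α i) (p.2 i)
      - ∏ i ∈ s, ((p.2 i : ℝ) / p.1) ^ α i) (bfil n) (𝓝 0) := by
  classical
  induction s using Finset.induction_on with
  | empty => simpa using tendsto_const_nhds
  | insert j s hj ih =>
    have h3 := (bdd_le_mul_tendsto_zero' 1
      (f := fun p : ℕ × (Fin n → ℕ) => bw p.1 (α j) (p.2 j)) (by
      filter_upwards [bfil_le n] with p hp
      exact bw_abs _ _ _ (hp j)) ih)
    have h4 := (bdd_le_mul_tendsto_zero' 1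
      (f := fun p : ℕ × (Fin n → ℕ) => ∏ i ∈ s, ((p.2 i : ℝ) / p.1) ^ α i) (by
      filter_upwards [bfil_le n] with p hp
      rw [abs_of_nonneg (by positivity)]
      refine Finset.prod_le_one (fun i _ => by positivity) fun i _ => ?_
      refine pow_le_one₀ (by positivity) ?_
      exact div_le_one_of_le₀ (by exact_mod_cast hp i) (by positivity)) (bw_tendsto j (α j)))
    have h5 := h3.add h4
    rw [add_zero] at h5
    refine h5.congr fun p => ?_
    rw [Finset.prod_insert hj, Finset.prod_insert hj]
    ring

/-- tensor Bernstein polynomial -/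
noncomputable def bern (d : ℕ) (κ : Fin n → ℕ) : MvPolynomial (Fin n) ℝ :=
  ∏ i, (C (d.choose (κ i) : ℝ) * X i ^ κ i * (1 - X i) ^ (d - κ i))

theorem bern_monomial (α : Fin n → ℕ) (d : ℕ) (hd : ∀ i, α i ≤ d) :
    ∏ i, (X i : MvPolynomial (Fin n) ℝ) ^ α i =
      ∑ κ ∈ Fintype.piFinset (fun _ : Fin n => Finset.range (d + 1)),
        C (∏ i, bw d (α i) (κ i)) * bern d κ := by
  have h1 : ∀ i, (X i : MvPolynomial (Fin n) ℝ) ^ α i = ∑ k ∈ Finset.range (d + 1),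
      C (bw d (α i) k) * (C (d.choose k : ℝ) * X i ^ k * (1 - X i) ^ (d - k)) := by
    intro i
    obtain ⟨m, rfl⟩ := Nat.exists_eq_add_of_le (hd i)
    have h2 := bern_uni (X i : MvPolynomial (Fin n) ℝ) (α i) m
    have h3 : ((α i + m).choose (α i) : ℝ) ≠ 0 := by
      exact_mod_cast (Nat.choose_pos (Nat.le_add_right _ _)).ne'
    have h4 : (C (((α i + m).choose (α i) : ℝ)⁻¹) : MvPolynomial (Fin n) ℝ) *
        ((α i + m).choose (α i) : MvPolynomial (Fin n) ℝ) = 1 := by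
      rw [← map_natCast (C : ℝ →+* MvPolynomial (Fin n) ℝ), ← C_mul, inv_mul_cancel₀ h3, C_1]
    calc (X i : MvPolynomial (Fin n) ℝ) ^ α i = C (((α i + m).choose (α i) : ℝ)⁻¹) *
          (((α i + m).choose (α i) : MvPolynomial (Fin n) ℝ) * X i ^ α i) := by
          rw [← mul_assoc, h4, one_mul]
      _ = _ := by
          rw [← h2, Finset.mul_sum]
          refine Finset.sum_congr rfl fun k _ => ?_
          rw [bw, div_eq_inv_mul, C_mul, map_natCast, map_natCast]
          ring
  simp only [bern]
  rw [Finset.prod_congr rfl fun i _ => h1 i, Finset.prod_univ_sum]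
  refine Finset.sum_congr rfl fun κ _ => ?_
  rw [Finset.prod_mul_distrib, map_prod]

theorem bern_good (f : MvPolynomial (Fin n) ℝ) :
    ∃ c : ℕ → (Fin n → ℕ) → ℝ,
      (∀ᶠ d in atTop, f = ∑ κ ∈ Fintype.piFinset (fun _ : Fin n => Finset.range (d + 1)),
        C (c d κ) * bern d κ) ∧
      Tendsto (fun p : ℕ × (Fin n → ℕ) => c p.1 p.2 - eval (fun i => (p.2 i : ℝ) / p.1) f)
        (bfil n) (𝓝 0) := by
  induction f using MvPolynomial.induction_on' with
  | monomial α a =>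
    refine ⟨fun d κ => a * ∏ i, bw d (α i) (κ i), ?_, ?_⟩
    · have : ∀ᶠ d in atTop, ∀ i, α i ≤ d :=
        eventually_all.2 fun i => eventually_ge_atTop (α i)
      filter_upwards [this] with d hd
      rw [monomial_eq, Finsupp.prod_fintype _ _ (by simp), bern_monomial α d hd, Finset.mul_sum]
      refine Finset.sum_congr rfl fun κ _ => ?_
      rw [C_mul, mul_assoc]
    · have := (bw_prod_tendsto Finset.univ α).const_mul a
      rw [mul_zero] at this
      refine this.congr fun p => ?_
      rw [eval_monomial, Finsupp.prod_fintype _ _ (by simp)]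
      ring
  | add f g hf hg =>
    obtain ⟨c, h1, h2⟩ := hf
    obtain ⟨c', h1', h2'⟩ := hg
    refine ⟨fun d κ => c d κ + c' d κ, ?_, ?_⟩
    · filter_upwards [h1, h1'] with d hd hd'
      simp only [C_add, add_mul, Finset.sum_add_distrib]
      rw [← hd, ← hd']
    · have := h2.add h2'
      rw [add_zero] at this
      refine this.congr fun p => ?_
      rw [map_add]; ring

end
end SosCvx

namespace SosCvx
open Filter Topology MvPolynomial

section
variable {n : ℕ}

open scoped MatrixOrder in
theorem quad_mem (T : Subsemiring (MvPolynomial (Fin n) ℝ)) (hT : ∀ x, x * x ∈ T)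
    (a : Fin n → Fin n → ℝ) (ha : ∀ y : Fin n → ℝ, 0 ≤ ∑ i, ∑ j, y i * y j * a i j) :
    ∑ i, ∑ j, X i * X j * C (a i j) ∈ T := by
  let M : Matrix (Fin n) (Fin n) ℝ := fun i j => (a i j + a j i) / 2
  have sym : ∀ y : Fin n → ℝ, ∑ i, ∑ j, y i * y j * M i j = ∑ i, ∑ j, y i * y j * a i j := by
    intro y
    have e1 : ∑ i, ∑ j, y i * y j * a j i = ∑ i, ∑ j, y i * y j * a i j := by
      rw [Finset.sum_comm]
      refine Finset.sum_congr rfl fun i _ => Finset.sum_congr rfl fun j _ => by ring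
    have e2 : ∑ i, ∑ j, y i * y j * M i j = (∑ i, ∑ j, y i * y j * a i j) / 2 +
        (∑ i, ∑ j, y i * y j * a j i) / 2 := by
      simp only [Finset.sum_div, ← Finset.sum_add_distrib]
      refine Finset.sum_congr rfl fun i _ => Finset.sum_congr rfl fun j _ => ?_
      simp only [M]; ring
    rw [e2, e1]; ring
  have hM : M.PosSemidef := by
    refine Matrix.PosSemidef.of_dotProduct_mulVec_nonneg ?_ fun y => ?_
    · ext i j
      rw [Matrix.conjTranspose_apply, star_trivial]
      simp only [M]
      ring
    · refine le_of_le_of_eq (ha y) ?_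
      rw [← sym]
      simp only [dotProduct, Matrix.mulVec, star_trivial, Finset.mul_sum]
      refine Finset.sum_congr rfl fun i _ => Finset.sum_congr rfl fun j _ => by ring
  obtain ⟨B, hB⟩ := CStarAlgebra.nonneg_iff_eq_star_mul_self.mp hM.nonneg
  have hMB : ∀ i j, M i j = ∑ l, B l i * B l j := by
    intro i j
    rw [hB, Matrix.star_eq_conjTranspose, Matrix.mul_apply]
    simp
  have e : ∑ i, ∑ j, X i * X j * C (a i j) =
      ∑ l, (∑ i, C (B l i) * X i) * (∑ i, C (B l i) * X i : MvPolynomial (Fin n) ℝ) := by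
    apply MvPolynomial.funext
    intro y
    simp only [map_sum, map_mul, eval_X, eval_C]
    rw [← sym]
    simp only [hMB, Finset.mul_sum]
    conv_lhs =>
      enter [2, i]
      rw [Finset.sum_comm]
    rw [Finset.sum_comm]
    refine Finset.sum_congr rfl fun l _ => Finset.sum_congr rfl fun i _ => ?_
    rw [Finset.sum_mul]
    refine Finset.sum_congr rfl fun j _ => by ring
  rw [e]
  exact T.sum_mem fun l _ => hT _

theorem matrix_mem (T : Subsemiring (MvPolynomial (Fin n) ℝ)) (hT : ∀ x, x * x ∈ T)
    (R : ℝ) (hR : 0 < R) (hR1 : ∀ i, C R - X i ∈ T) (hR2 : ∀ i, C R + X i ∈ T)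
    (A : Fin n → Fin n → MvPolynomial (Fin n) ℝ)
    (hpos : ∀ x y : Fin n → ℝ, y ≠ 0 → 0 < ∑ i, ∑ j, y i * y j * eval x (A i j)) :
    ∑ i, ∑ j, X i * X j * A i j ∈ T := by
  classical
  let φ : MvPolynomial (Fin n) ℝ →ₐ[ℝ] MvPolynomial (Fin n) ℝ :=
    aeval (fun i => C (1 / (2 * R)) * (C R + X i))
  let ψ : MvPolynomial (Fin n) ℝ →ₐ[ℝ] MvPolynomial (Fin n) ℝ :=
    aeval (fun i => C (2 * R) * X i - C R)
  have hφψ : ∀ q, φ (ψ q) = q := by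
    intro q
    have : (φ.comp ψ) = AlgHom.id ℝ _ := by
      apply MvPolynomial.algHom_ext
      intro i
      have e : (C (2 * R) * C (1 / (2 * R)) : MvPolynomial (Fin n) ℝ) = 1 := by
        rw [← C_mul, mul_one_div_cancel (by positivity), C_1]
      have hC : ∀ r : ℝ, φ (C r) = C r := fun r => by simp [φ]
      have hX : φ (X i) = C (1 / (2 * R)) * (C R + X i) := by simp [φ]
      have hX' : ψ (X i) = C (2 * R) * X i - C R := by simp [ψ]
      rw [AlgHom.comp_apply, hX', map_sub, map_mul, hC, hC, hX, AlgHom.id_apply]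
      linear_combination (C R + X i) * e
    exact congrArg (fun g : MvPolynomial (Fin n) ℝ →ₐ[ℝ] MvPolynomial (Fin n) ℝ => g q) this
  have hev : ∀ (u : Fin n → ℝ) q, eval u (ψ q) = eval (fun i => 2 * R * u i - R) q := by
    intro u q
    have : (eval u).comp ψ.toRingHom = eval (fun i => 2 * R * u i - R) := by
      apply MvPolynomial.ringHom_ext
      · intro r; simp [ψ]
      · intro i; simp [ψ]
    exact congrArg (fun g : MvPolynomial (Fin n) ℝ →+* ℝ => g q) this
  have hC1 : (C (1 / (2 * R)) : MvPolynomial (Fin n) ℝ) ∈ T := C_mem T hT _ (by positivity)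
  have hbern : ∀ d κ, φ (bern d κ) ∈ T := by
    intro d κ
    simp only [bern, map_prod, map_mul, map_pow, map_sub, map_one]
    refine T.prod_mem fun i _ => ?_
    have hX : φ (X i) = C (1 / (2 * R)) * (C R + X i) := by simp [φ]
    have hX1 : 1 - φ (X i) = C (1 / (2 * R)) * (C R - X i) := by
      rw [hX]
      have e : (C (1 / (2 * R)) * C R + C (1 / (2 * R)) * C R : MvPolynomial (Fin n) ℝ) = 1 := by
        rw [← C_mul, ← C_add, ← C_1]
        congr 1
        field_simp
        norm_num
      linear_combination -e
    refine T.mul_mem (T.mul_mem ?_ (T.pow_mem ?_ _)) (T.pow_mem ?_ _)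
    · have : φ (C (d.choose (κ i) : ℝ)) = C (d.choose (κ i) : ℝ) := by simp [φ]
      rw [this]
      exact C_mem T hT _ (by positivity)
    · rw [hX]; exact T.mul_mem hC1 (hR2 i)
    · rw [hX1]; exact T.mul_mem hC1 (hR1 i)
  -- compactness
  obtain ⟨δ, hδ, hmin⟩ := IsCompact.exists_forall_le'
    ((isCompact_Icc (a := (0 : Fin n → ℝ)) (b := 1)).prod (isCompact_sphere (0 : Fin n → ℝ) 1))
    (f := fun z : (Fin n → ℝ) × (Fin n → ℝ) =>
      ∑ i, ∑ j, z.2 i * z.2 j * eval z.1 (ψ (A i j)))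
    (by
      apply Continuous.continuousOn
      refine continuous_finsetSum _ fun i _ => continuous_finsetSum _ fun j _ => ?_
      have := (MvPolynomial.continuous_eval (ψ (A i j))).comp
        (continuous_fst : Continuous (Prod.fst : (Fin n → ℝ) × (Fin n → ℝ) → Fin n → ℝ))
      exact Continuous.mul (by fun_prop) this)
    (a := 0) (by
      rintro ⟨u, y⟩ ⟨_, hy⟩
      simp only [hev]
      apply hpos
      rintro rfl
      simp at hy)
  choose c hc1 hc2 using fun i j => bern_good (ψ (A i j))
  let ε := δ / (n * n + 1)
  have hε : 0 < ε := by positivity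
  have hclose : ∀ᶠ p in bfil n, ∀ i j,
      |c i j p.1 p.2 - eval (fun i => (p.2 i : ℝ) / p.1) (ψ (A i j))| ≤ ε := by
    refine eventually_all.2 fun i => eventually_all.2 fun j => ?_
    have := (hc2 i j).eventually (Metric.closedBall_mem_nhds 0 hε)
    filter_upwards [this] with p hp
    simpa using hp
  have hD : ∀ᶠ d in atTop, ∀ κ : Fin n → ℕ, (∀ i, κ i ≤ d) → ∀ i j,
      |c i j d κ - eval (fun i => (κ i : ℝ) / d) (ψ (A i j))| ≤ ε := by
    rw [bfil, eventually_inf_principal, eventually_comap] at hclose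
    filter_upwards [hclose] with d hd κ hκ
    exact hd (d, κ) rfl hκ
  have hrep : ∀ᶠ d in atTop, ∀ i j, ψ (A i j) =
      ∑ κ ∈ Fintype.piFinset (fun _ : Fin n => Finset.range (d + 1)),
        C (c i j d κ) * bern d κ :=
    eventually_all.2 fun i => eventually_all.2 fun j => hc1 i j
  obtain ⟨d, hd, hd', -⟩ := (hD.and (hrep.and (eventually_ge_atTop 0))).exists
  have hA : ∀ i j, A i j = ∑ κ ∈ Fintype.piFinset (fun _ : Fin n => Finset.range (d + 1)),
        C (c i j d κ) * φ (bern d κ) := by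
    intro i j
    conv_lhs => rw [← hφψ (A i j), hd' i j, map_sum]
    refine Finset.sum_congr rfl fun κ _ => ?_
    rw [map_mul]
    congr 1
    simp [φ]
  have e : ∑ i, ∑ j, X i * X j * A i j =
      ∑ κ ∈ Fintype.piFinset (fun _ : Fin n => Finset.range (d + 1)),
        φ (bern d κ) * ∑ i, ∑ j, X i * X j * C (c i j d κ) := by
    conv_lhs =>
      enter [2, i, 2, j]
      rw [hA i j, Finset.mul_sum]
    simp only [Finset.mul_sum]
    conv_lhs =>
      enter [2, i]
      rw [Finset.sum_comm]
    rw [Finset.sum_comm]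
    refine Finset.sum_congr rfl fun l _ => Finset.sum_congr rfl fun i _ =>
      Finset.sum_congr rfl fun j _ => by ring
  rw [e]
  refine T.sum_mem fun κ hκ => T.mul_mem (hbern d κ) (quad_mem T hT _ fun y => ?_)
  have hκ' : ∀ i, κ i ≤ d := fun i =>
    Nat.lt_succ_iff.1 (Finset.mem_range.1 (Fintype.mem_piFinset.1 hκ i))
  have hd2 := hd κ hκ'
  by_cases hy : y = 0
  · simp [hy]
  have hyn : 0 < ‖y‖ := norm_pos_iff.2 hy
  set z : Fin n → ℝ := ‖y‖⁻¹ • y with hz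
  have hzn : ‖z‖ = 1 := by
    rw [hz, norm_smul, norm_inv, norm_norm, inv_mul_cancel₀ hyn.ne']
  have hyz : ∀ i, y i = ‖y‖ * z i := by
    intro i
    simp only [hz, Pi.smul_apply, smul_eq_mul]
    field_simp
  have h1 : ∑ i, ∑ j, y i * y j * c i j d κ = ‖y‖ ^ 2 * ∑ i, ∑ j, z i * z j * c i j d κ := by
    simp only [Finset.mul_sum]
    refine Finset.sum_congr rfl fun i _ => Finset.sum_congr rfl fun j _ => ?_
    rw [hyz i, hyz j]; ring
  rw [h1]
  refine mul_nonneg (by positivity) ?_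
  have hκR : ∀ i, (κ i : ℝ) ≤ d := fun i => by exact_mod_cast hκ' i
  have h2 := hmin (fun i => (κ i : ℝ) / d, z) ⟨⟨fun i => by simp; positivity, fun i =>
    div_le_one_of_le₀ (hκR i) (Nat.cast_nonneg d)⟩, by simpa using hzn⟩
  simp only at h2
  have h3 : ∑ i, ∑ j, z i * z j * eval (fun i => (κ i : ℝ) / d) (ψ (A i j)) -
      ∑ i : Fin n, ∑ j : Fin n, ε ≤ ∑ i, ∑ j, z i * z j * c i j d κ := by
    rw [← Finset.sum_sub_distrib]
    refine Finset.sum_le_sum fun i _ => ?_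
    rw [← Finset.sum_sub_distrib]
    refine Finset.sum_le_sum fun j _ => ?_
    have hzi : |z i| ≤ 1 := by rw [← hzn]; exact norm_le_pi_norm z i
    have hzj : |z j| ≤ 1 := by rw [← hzn]; exact norm_le_pi_norm z j
    have h4 : |z i * z j * (c i j d κ - eval (fun i => (κ i : ℝ) / d) (ψ (A i j)))| ≤ 1 * ε := by
      rw [abs_mul]
      refine mul_le_mul ?_ (hd2 i j) (abs_nonneg _) zero_le_one
      rw [abs_mul]
      exact mul_le_one₀ hzi (abs_nonneg _) hzj
    have := (abs_le.1 h4).1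
    linarith
  have h5 : ∑ i : Fin n, ∑ j : Fin n, ε ≤ δ := by
    simp only [Finset.sum_const, Finset.card_univ, Fintype.card_fin, nsmul_eq_mul, ε]
    rw [← mul_assoc, mul_div_assoc', div_le_iff₀ (by positivity)]
    nlinarith
  linarith

theorem core (h : MvPolynomial (Fin n) ℝ)
    (hcv : ConvexOn ℝ Set.univ (fun x : Fin n → ℝ => eval x h))
    (h0 : eval (0 : Fin n → ℝ) h = 0) (h1 : ∀ i, eval (0 : Fin n → ℝ) (pderiv i h) = 0)
    (hPD : ∀ y : Fin n → ℝ, y ≠ 0 →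
      0 < ∑ i, ∑ j, y i * y j * eval (0 : Fin n → ℝ) (pderiv j (pderiv i h))) (c : ℝ) :
    ∃ s t : MvPolynomial (Fin n) ℝ, IsSumSq s ∧ IsSumSq t ∧ h = s + t * (C c - h) := by
  obtain ⟨A, hA, hpos⟩ := exists_matrix h hcv h0 h1 hPD
  have hh := nice_of h hcv A hA hpos
  let S0 : Subsemiring (MvPolynomial (Fin n) ℝ) := Subsemiring.sumSq _
  have hS0 : ∀ x, x * x ∈ S0 := fun x => by simp [S0]
  let T := adj S0 hS0 (C c - h)
  have hT : ∀ x, x * x ∈ T := fun x => le_adj hS0 _ (hS0 x)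
  have hb := fun i : Fin n => arch' hh T hT c (self_mem_adj hS0 _) (X i)
  choose M hM1 hM2 using hb
  let R := 1 + ∑ i, |M i|
  have hR : 0 < R := by positivity
  have hMR : ∀ i, M i ≤ R := fun i => by
    have : |M i| ≤ ∑ i, |M i| :=
      Finset.single_le_sum (f := fun i => |M i|) (fun _ _ => abs_nonneg _) (Finset.mem_univ i)
    have := le_abs_self (M i)
    simp only [R]
    linarith
  have hmem : h ∈ T := by
    rw [hA]
    refine matrix_mem T hT R hR (fun i => ?_) (fun i => ?_) A hpos
    · convert T.add_mem (hM1 i) (C_mem T hT (R - M i) (sub_nonneg.2 (hMR i))) using 1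
      rw [C_sub]; ring
    · convert T.add_mem (hM2 i) (C_mem T hT (R - M i) (sub_nonneg.2 (hMR i))) using 1
      rw [C_sub]; ring
  obtain ⟨s, hs, t, ht, e⟩ := hmem
  exact ⟨s, t, by simpa [S0] using hs, by simpa [S0] using ht, e⟩

end
end SosCvx

namespace SosCvx
open Filter Topology MvPolynomial

section
variable {n : ℕ}

theorem contDiff_eval (q : MvPolynomial (Fin n) ℝ) :
    ContDiff ℝ 2 (fun x : Fin n → ℝ => eval x q) := by
  induction q using MvPolynomial.induction_on with
  | C r => simpa using contDiff_const
  | add p q hp hq => simpa using hp.add hq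
  | mul_X p j hp => simpa using hp.mul (contDiff_apply ℝ ℝ j)

theorem fderiv_eval (q : MvPolynomial (Fin n) ℝ) (x v : Fin n → ℝ) :
    fderiv ℝ (fun x : Fin n → ℝ => eval x q) x v = ∑ i, v i * eval x (pderiv i q) := by
  have hd : DifferentiableAt ℝ (fun x : Fin n → ℝ => eval x q) x :=
    ((contDiff_eval q).differentiable (by norm_num)) x
  have h1 := hd.hasFDerivAt.hasLineDerivAt v
  unfold HasLineDerivAt at h1
  have h2 := (lin x v q).hasDerivAt 0
  simp only [eval_lin] at h2
  rw [h1.unique h2, derivative_lin, Polynomial.eval_finsetSum]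
  refine Finset.sum_congr rfl fun i _ => ?_
  rw [Polynomial.eval_mul, Polynomial.eval_C, eval_lin]
  simp

theorem iteratedFDeriv_eval (q : MvPolynomial (Fin n) ℝ) (x v : Fin n → ℝ) :
    iteratedFDeriv ℝ 2 (fun x : Fin n → ℝ => eval x q) x ![v, v] =
      ∑ i, ∑ j, v i * v j * eval x (pderiv j (pderiv i q)) := by
  rw [iteratedFDeriv_two_apply]
  have hd : DifferentiableAt ℝ (fderiv ℝ (fun x : Fin n → ℝ => eval x q)) x :=
    (((contDiff_eval q).fderiv_right (m := 1) (by norm_num)).differentiable (by norm_num)) x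
  have e : (fun x => fderiv ℝ (fun x : Fin n → ℝ => eval x q) x v) =
      fun x => eval x (∑ i, C (v i) * pderiv i q) := by
    funext x
    rw [fderiv_eval]; simp
  have h1 : fderiv ℝ (fun x => fderiv ℝ (fun x : Fin n → ℝ => eval x q) x v) x v =
      fderiv ℝ (fderiv ℝ (fun x : Fin n → ℝ => eval x q)) x v v := by
    have := hd.hasFDerivAt.clm_apply (hasFDerivAt_const v x)
    rw [this.fderiv]; simp
  simp only [Matrix.cons_val_zero, Matrix.cons_val_one]
  rw [← h1, e, fderiv_eval]
  simp only [map_sum, Derivation.leibniz, pderiv_C, smul_eq_mul,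
    Finset.mul_sum]
  rw [Finset.sum_comm]
  refine Finset.sum_congr rfl fun i _ => Finset.sum_congr rfl fun j _ => ?_
  rw [mul_zero, add_zero, eval_mul, eval_C]
  ring

theorem isSumSq_map {A B : Type*} [CommRing A] [CommRing B] (φ : A →+* B) {s : A}
    (hs : IsSumSq s) : IsSumSq (φ s) := by
  induction hs with
  | zero => rw [map_zero]; exact IsSumSq.zero
  | sq_add a hs ih => rw [map_add, map_mul]; exact IsSumSq.sq_add _ ih

theorem isSumSq_C (r : ℝ) (hr : 0 ≤ r) : IsSumSq (C r : MvPolynomial (Fin n) ℝ) := by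
  have : (C r : MvPolynomial (Fin n) ℝ) = C (Real.sqrt r) * C (Real.sqrt r) := by
    rw [← C_mul, Real.mul_self_sqrt hr]
  rw [this]
  exact IsSumSq.mul_self _

theorem isSumSq_fin {q : MvPolynomial (Fin n) ℝ} (hq : IsSumSq q) :
    ∃ (r : ℕ) (s : Fin r → MvPolynomial (Fin n) ℝ), q = ∑ l, (s l) ^ 2 := by
  induction hq with
  | zero => exact ⟨0, fun _ => 0, by simp⟩
  | sq_add a hs ih =>
    obtain ⟨r, s, h⟩ := ih
    refine ⟨r + 1, Fin.cons a s, ?_⟩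
    rw [Fin.sum_univ_succ]
    simp [h, pow_two]

theorem base (q : MvPolynomial (Fin n) ℝ) (xb : Fin n → ℝ)
    (hcv : ConvexOn ℝ Set.univ (fun x : Fin n → ℝ => eval x q))
    (h0 : eval xb q = 0) (hmin : ∀ x, 0 ≤ eval x q)
    (hPD : ∀ v : Fin n → ℝ, v ≠ 0 →
      0 < iteratedFDeriv ℝ 2 (fun x : Fin n → ℝ => eval x q) xb ![v, v]) (c : ℝ) :
    ∃ s t : MvPolynomial (Fin n) ℝ, IsSumSq s ∧ IsSumSq t ∧ q = s + t * (C c - q) := by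
  set h : MvPolynomial (Fin n) ℝ := aeval (fun i => X i + C (xb i)) q with hh
  have hev : ∀ y : Fin n → ℝ, eval y h = eval (xb + y) q := by
    intro y
    have : (eval y).comp
        (aeval (fun i => X i + C (xb i)) : MvPolynomial (Fin n) ℝ →ₐ[ℝ] _).toRingHom
        = eval (xb + y) := by
      apply MvPolynomial.ringHom_ext
      · intro i; simp
      · intro i; simp [add_comm]
    exact congrArg (fun g : MvPolynomial (Fin n) ℝ →+* ℝ => g q) this
  have hlin : ∀ y, lin 0 y h = lin xb y q := by
    intro y
    apply Polynomial.funext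
    intro t
    rw [eval_lin, eval_lin, hev, zero_add]
  have hback : ∀ r, aeval (fun i => X i - C (xb i))
      (aeval (fun i => X i + C (xb i)) r : MvPolynomial (Fin n) ℝ) = r := by
    intro r
    have : ((aeval (fun i => X i - C (xb i)) : MvPolynomial (Fin n) ℝ →ₐ[ℝ]
        MvPolynomial (Fin n) ℝ).comp (aeval (fun i => X i + C (xb i)))) = AlgHom.id ℝ _ := by
      apply MvPolynomial.algHom_ext
      intro i; simp [algebraMap_eq]
    exact congrArg (fun g : MvPolynomial (Fin n) ℝ →ₐ[ℝ] MvPolynomial (Fin n) ℝ => g r) this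
  have hcvh : ConvexOn ℝ Set.univ (fun x : Fin n → ℝ => eval x h) := by
    have e : (fun x : Fin n → ℝ => eval x h) = fun x => eval (xb + x) q := funext hev
    rw [e]
    refine ⟨convex_univ, fun x _ y _ a b ha hb hab => ?_⟩
    have := hcv.2 (Set.mem_univ (xb + x)) (Set.mem_univ (xb + y)) ha hb hab
    have e2 : a • (xb + x) + b • (xb + y) = xb + (a • x + b • y) := by
      have : xb = a • xb + b • xb := by rw [← add_smul, hab, one_smul]
      rw [smul_add, smul_add]
      nth_rw 3 [this]
      abel
    rw [e2] at this
    exact this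
  have hh0 : eval (0 : Fin n → ℝ) h = 0 := by rw [hev, add_zero, h0]
  have hmem1 : ∀ i, eval (0 : Fin n → ℝ) (pderiv i h) = 0 := by
    intro i
    have hd := (lin 0 (Pi.single i 1) h).hasDerivAt 0
    have hm : IsLocalMin (fun t => (lin 0 (Pi.single i 1) h).eval t) 0 := by
      refine Filter.Eventually.of_forall fun t => ?_
      simp only [eval_lin, hev]
      simpa [h0] using hmin _
    have := hm.hasDerivAt_eq_zero hd
    rw [derivative_lin, Polynomial.eval_finsetSum, Finset.sum_eq_single i] at this
    · rw [Polynomial.eval_mul, eval_lin] at this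
      simpa using this
    · intro j _ hj
      simp [Pi.single_eq_of_ne hj]
    · simp
  have hPDh : ∀ y : Fin n → ℝ, y ≠ 0 →
      0 < ∑ i, ∑ j, y i * y j * eval (0 : Fin n → ℝ) (pderiv j (pderiv i h)) := by
    intro y hy
    have h3 := hPD y hy
    rw [iteratedFDeriv_eval] at h3
    have e : ∀ (a : Fin n → ℝ) (r : MvPolynomial (Fin n) ℝ),
        (lin a y r).derivative.derivative.eval 0 =
        ∑ i, ∑ j, y i * y j * eval a (pderiv j (pderiv i r)) := by
      intro a r
      rw [derivative2_lin, Polynomial.eval_finsetSum]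
      refine Finset.sum_congr rfl fun i _ => ?_
      rw [Polynomial.eval_finsetSum]
      refine Finset.sum_congr rfl fun j _ => ?_
      rw [Polynomial.eval_mul, Polynomial.eval_C, eval_lin]
      simp
    rw [← e, hlin, e]
    exact h3
  obtain ⟨s, t, hs, ht, hst⟩ := core h hcvh hh0 hmem1 hPDh c
  refine ⟨aeval (fun i => X i - C (xb i)) s, aeval (fun i => X i - C (xb i)) t,
    isSumSq_map (aeval (fun i => X i - C (xb i)) : MvPolynomial (Fin n) ℝ →ₐ[ℝ]
      MvPolynomial (Fin n) ℝ).toRingHom hs,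
    isSumSq_map (aeval (fun i => X i - C (xb i)) : MvPolynomial (Fin n) ℝ →ₐ[ℝ]
      MvPolynomial (Fin n) ℝ).toRingHom ht, ?_⟩
  have := congrArg (aeval (fun i => X i - C (xb i)) : MvPolynomial (Fin n) ℝ →ₐ[ℝ]
      MvPolynomial (Fin n) ℝ) hst
  rw [map_add, map_mul, map_sub, hh, hback] at this
  rw [aeval_C] at this
  exact this

end
end SosCvx

theorem stmt_9 {n m p : ℕ} (F : Fin p → MvPolynomial (Fin n) ℝ)
    (G : Fin m → MvPolynomial (Fin n) ℝ)
    (f : Fin p → (Fin n → ℝ) → ℝ) (hf : ∀ j, f j = fun x => MvPolynomial.eval x (F j))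
    (g : Fin m → (Fin n → ℝ) → ℝ) (hg : ∀ i, g i = fun x => MvPolynomial.eval x (G i))
    (hconvf : ∀ j, ConvexOn ℝ Set.univ (f j)) (hconvg : ∀ i, ConvexOn ℝ Set.univ (g i))
    (lam : Fin p → ℝ) (hlam : ∀ j, 0 < lam j)
    (z₀ : Fin n → ℝ) (hz₀ : ∀ i, g i z₀ ≤ 0)
    -- f̄_{z₀} is the minimum of λᵀf over K_{z₀}
    (fbar : ℝ)
    (hfbar : (∀ x : Fin n → ℝ, (∀ i, g i x ≤ 0) → (∀ j, f j x ≤ f j z₀) →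
        fbar ≤ ∑ j, lam j * f j x) ∧
      ∃ x : Fin n → ℝ, (∀ i, g i x ≤ 0) ∧ (∀ j, f j x ≤ f j z₀) ∧
        ∑ j, lam j * f j x = fbar)
    -- Assumption 1: saddle point of the Lagrangian with positive definite Hessian in x
    (L : (Fin n → ℝ) → (Fin m → ℝ) → (Fin p → ℝ) → ℝ)
    (hL : L = fun x μ ν =>
      ∑ j, lam j * f j x + ∑ i, μ i * g i x + ∑ j, ν j * (f j x - f j z₀))
    (xb : Fin n → ℝ) (μb : Fin m → ℝ) (νb : Fin p → ℝ)
    (hμb : ∀ i, 0 ≤ μb i) (hνb : ∀ j, 0 ≤ νb j)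
    (hxb : (∀ i, g i xb ≤ 0) ∧ (∀ j, f j xb ≤ f j z₀))
    (hsaddle1 : ∀ x : Fin n → ℝ, L xb μb νb ≤ L x μb νb)
    (hsaddle2 : ∀ (μ : Fin m → ℝ) (ν : Fin p → ℝ),
      (∀ i, 0 ≤ μ i) → (∀ j, 0 ≤ ν j) → L xb μ ν ≤ L xb μb νb)
    (hPD : ∀ v : Fin n → ℝ, v ≠ 0 →
      0 < iteratedFDeriv ℝ 2 (fun x => L x μb νb) xb ![v, v]) :
    ∃ (σ₀ : MvPolynomial (Fin n) ℝ) (σ : Fin m → MvPolynomial (Fin n) ℝ)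
      (σb : Fin p → MvPolynomial (Fin n) ℝ),
      IsSOS σ₀ ∧ (∀ i, IsSOS (σ i)) ∧ (∀ j, IsSOS (σb j)) ∧
      (∑ j, MvPolynomial.C (lam j) * F j) - MvPolynomial.C fbar =
        σ₀ - ∑ i, σ i * G i - ∑ j, σb j * (F j - MvPolynomial.C (f j z₀)) := by
  subst hL
  obtain rfl : f = fun j x => MvPolynomial.eval x (F j) := funext hf
  obtain rfl : g = fun i x => MvPolynomial.eval x (G i) := funext hg
  simp only at *
  obtain ⟨hlow, xs, hxs1, hxs2, hxs3⟩ := hfbar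
  set Lp : MvPolynomial (Fin n) ℝ := ∑ j, MvPolynomial.C (lam j) * F j +
    ∑ i, MvPolynomial.C (μb i) * G i +
    ∑ j, MvPolynomial.C (νb j) * (F j - MvPolynomial.C (MvPolynomial.eval z₀ (F j))) with hLp
  have hevL : ∀ x : Fin n → ℝ, MvPolynomial.eval x Lp =
      ∑ j, lam j * MvPolynomial.eval x (F j) + ∑ i, μb i * MvPolynomial.eval x (G i) +
      ∑ j, νb j * (MvPolynomial.eval x (F j) - MvPolynomial.eval z₀ (F j)) := by
    intro x
    simp [hLp]
  have hle : ∀ x : Fin n → ℝ, (∀ i, MvPolynomial.eval x (G i) ≤ 0) →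
      (∀ j, MvPolynomial.eval x (F j) ≤ MvPolynomial.eval z₀ (F j)) →
      MvPolynomial.eval x Lp ≤ ∑ j, lam j * MvPolynomial.eval x (F j) := by
    intro x h1 h2
    rw [hevL]
    have a1 : ∑ i, μb i * MvPolynomial.eval x (G i) ≤ 0 :=
      Finset.sum_nonpos fun i _ => mul_nonpos_of_nonneg_of_nonpos (hμb i) (h1 i)
    have a2 : ∑ j, νb j * (MvPolynomial.eval x (F j) - MvPolynomial.eval z₀ (F j)) ≤ 0 :=
      Finset.sum_nonpos fun j _ =>
        mul_nonpos_of_nonneg_of_nonpos (hνb j) (sub_nonpos.2 (h2 j))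
    linarith
  have hmin : ∀ x, MvPolynomial.eval xb Lp ≤ MvPolynomial.eval x Lp := by
    intro x
    rw [hevL, hevL]
    exact hsaddle1 x
  have hval : MvPolynomial.eval xb Lp = fbar := by
    apply le_antisymm
    · have := hle xs hxs1 hxs2
      linarith [hmin xs]
    · have h1 := hlow xb hxb.1 hxb.2
      have h2 := hsaddle2 0 0 (fun _ => le_rfl) (fun _ => le_rfl)
      simp only [Pi.zero_apply, zero_mul, Finset.sum_const_zero, add_zero] at h2
      rw [hevL]
      linarith
  have hcvL : ConvexOn ℝ Set.univ
      (fun x : Fin n → ℝ => MvPolynomial.eval x (Lp - MvPolynomial.C fbar)) := by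
    refine ⟨convex_univ, fun x _ y _ a b ha hb hab => ?_⟩
    simp only [map_sub, MvPolynomial.eval_C, hevL, smul_eq_mul]
    have e1 : ∑ j, lam j * MvPolynomial.eval (a • x + b • y) (F j) ≤
        a * ∑ j, lam j * MvPolynomial.eval x (F j) +
        b * ∑ j, lam j * MvPolynomial.eval y (F j) := by
      rw [Finset.mul_sum, Finset.mul_sum, ← Finset.sum_add_distrib]
      refine Finset.sum_le_sum fun j _ => ?_
      have := (hconvf j).2 (Set.mem_univ x) (Set.mem_univ y) ha hb hab
      simp only [smul_eq_mul] at this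
      have := mul_le_mul_of_nonneg_left this (hlam j).le
      linarith
    have e2 : ∑ i, μb i * MvPolynomial.eval (a • x + b • y) (G i) ≤
        a * ∑ i, μb i * MvPolynomial.eval x (G i) +
        b * ∑ i, μb i * MvPolynomial.eval y (G i) := by
      rw [Finset.mul_sum, Finset.mul_sum, ← Finset.sum_add_distrib]
      refine Finset.sum_le_sum fun i _ => ?_
      have := (hconvg i).2 (Set.mem_univ x) (Set.mem_univ y) ha hb hab
      simp only [smul_eq_mul] at this
      have := mul_le_mul_of_nonneg_left this (hμb i)
      linarith
    have e3 : ∑ j, νb j * (MvPolynomial.eval (a • x + b • y) (F j) -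
          MvPolynomial.eval z₀ (F j)) ≤
        a * ∑ j, νb j * (MvPolynomial.eval x (F j) - MvPolynomial.eval z₀ (F j)) +
        b * ∑ j, νb j * (MvPolynomial.eval y (F j) - MvPolynomial.eval z₀ (F j)) := by
      rw [Finset.mul_sum, Finset.mul_sum, ← Finset.sum_add_distrib]
      refine Finset.sum_le_sum fun j _ => ?_
      have := (hconvf j).2 (Set.mem_univ x) (Set.mem_univ y) ha hb hab
      simp only [smul_eq_mul] at this
      have hj := mul_le_mul_of_nonneg_left this (hνb j)
      have : νb j * MvPolynomial.eval z₀ (F j) =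
          a * (νb j * MvPolynomial.eval z₀ (F j)) +
          b * (νb j * MvPolynomial.eval z₀ (F j)) := by
        rw [← add_mul, hab, one_mul]
      linarith
    have e4 : fbar = a * fbar + b * fbar := by rw [← add_mul, hab, one_mul]
    linarith
  have hPD2 : ∀ v : Fin n → ℝ, v ≠ 0 → 0 < iteratedFDeriv ℝ 2
      (fun x : Fin n → ℝ => MvPolynomial.eval x (Lp - MvPolynomial.C fbar)) xb ![v, v] := by
    intro v hv
    have h3 := hPD v hv
    have e : (fun x : Fin n → ℝ => ∑ j, lam j * MvPolynomial.eval x (F j) +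
        ∑ i, μb i * MvPolynomial.eval x (G i) +
        ∑ j, νb j * (MvPolynomial.eval x (F j) - MvPolynomial.eval z₀ (F j))) =
        fun x => MvPolynomial.eval x Lp := funext fun x => (hevL x).symm
    rw [e, SosCvx.iteratedFDeriv_eval] at h3
    rw [SosCvx.iteratedFDeriv_eval]
    simpa only [map_sub, MvPolynomial.pderiv_C, sub_zero, map_zero] using h3
  obtain ⟨s, t, hs, ht, hst⟩ := SosCvx.base (Lp - MvPolynomial.C fbar) xb hcvL
    (by rw [map_sub, MvPolynomial.eval_C, hval, sub_self])
    (fun x => by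
      rw [map_sub, MvPolynomial.eval_C, ← hval]
      exact sub_nonneg.2 (hmin x)) hPD2
    (∑ j, lam j * MvPolynomial.eval z₀ (F j) - fbar)
  refine ⟨s, fun i => MvPolynomial.C (μb i) * (1 + t),
    fun j => MvPolynomial.C (νb j) + t * MvPolynomial.C (lam j + νb j),
    SosCvx.isSumSq_fin hs,
    fun i => SosCvx.isSumSq_fin
      ((SosCvx.isSumSq_C _ (hμb i)).mul (IsSumSq.one.add ht)),
    fun j => SosCvx.isSumSq_fin ((SosCvx.isSumSq_C _ (hνb j)).add
      (ht.mul (SosCvx.isSumSq_C _ (add_nonneg (hlam j).le (hνb j))))), ?_⟩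
  have s1 : ∑ i, MvPolynomial.C (μb i) * (1 + t) * G i =
      (1 + t) * ∑ i, MvPolynomial.C (μb i) * G i := by
    rw [Finset.mul_sum]
    exact Finset.sum_congr rfl fun i _ => by ring
  have s2 : ∑ j, (MvPolynomial.C (νb j) + t * MvPolynomial.C (lam j + νb j)) *
        (F j - MvPolynomial.C (MvPolynomial.eval z₀ (F j))) =
      (1 + t) * ∑ j, MvPolynomial.C (νb j) *
        (F j - MvPolynomial.C (MvPolynomial.eval z₀ (F j))) +
      t * (∑ j, MvPolynomial.C (lam j) * F j -
        MvPolynomial.C (∑ j, lam j * MvPolynomial.eval z₀ (F j))) := by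
    rw [map_sum, ← Finset.sum_sub_distrib, Finset.mul_sum, Finset.mul_sum,
      ← Finset.sum_add_distrib]
    refine Finset.sum_congr rfl fun j _ => ?_
    rw [map_add, map_mul]
    ring
  rw [s1, s2]
  rw [hLp, map_sub] at hst
  linear_combination hst
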